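/- arXiv:1502.00859 — 2 statements merged into one kernel-verified Lean document; each statement's English description precedes it below -/
import Mathlib

section
/- There is an on-line coloring algorithm A such that for every P_9-free bipartite graph G and every enumeration π of its vertices, A properly colors the on-line graph (G, π) using at most 6(χ*(G) + 1)^2 colors, where χ*(G) is the on-line chromatic number of G. -/
/-! ### P_n-free graphs -/

/-- `f` lists the vertices of an induced path on `n` vertices in `G`. -/
def IsInducedPath {V : Type*} (G : SimpleGraph V) (n : ℕ) (f : Fin n → V) : Prop :=
  Function.Injective f ∧
    ∀ a b : Fin n, G.Adj (f a) (f b) ↔ (a.val + 1 = b.val ∨ b.val + 1 = a.val)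

/-- `G` contains no induced path on `n` vertices. -/
def PFree {V : Type*} (G : SimpleGraph V) (n : ℕ) : Prop :=
  ¬ ∃ f : Fin n → V, IsInducedPath G n f

/-! ### On-line coloring algorithms and the on-line chromatic number -/

/-- A (deterministic) on-line coloring algorithm: upon presentation of the `(k+1)`-st vertex it
sees the induced subgraph on the first `k+1` vertices in order of presentation (modelled as a
graph on `Fin (k+1)`, the new vertex being the last one) and it outputs the color of the new
vertex. -/
def OnlineAlg : Type := (k : ℕ) → SimpleGraph (Fin (k + 1)) → ℕ

/-- The color that algorithm `A` assigns to the `i`-th presented vertex of the on-line graph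
`G` (vertices presented in the order `0, 1, 2, …` of `Fin n`). -/
def runColor (A : OnlineAlg) {n : ℕ} (G : SimpleGraph (Fin n)) (i : Fin n) : ℕ :=
  A i.val (G.comap (Fin.castLE i.isLt))

/-- An on-line algorithm is required to always produce a proper coloring. -/
def IsProperAlg (A : OnlineAlg) : Prop :=
  ∀ (n : ℕ) (G : SimpleGraph (Fin n)) (i j : Fin n),
    G.Adj i j → runColor A G i ≠ runColor A G j

/-- The number of colors that `A` uses on the on-line graph `G`. -/
def numColors (A : OnlineAlg) {n : ℕ} (G : SimpleGraph (Fin n)) : ℕ :=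
  (Finset.univ.image (runColor A G)).card

/-- The on-line chromatic number of a finite graph `G`:
`χ*(G) = inf_A max_π A(G,π)`, the infimum over all proper on-line algorithms of the maximum
over all enumerations `π` of the vertices of `G` of the number of colors used. -/
noncomputable def onlineChrom (V : Type) [Fintype V] (G : SimpleGraph V) : ℕ :=
  sInf { m : ℕ | ∃ A : OnlineAlg, IsProperAlg A ∧
          ∀ (n : ℕ) (π : Fin n ≃ V), numColors A (G.comap π) ≤ m }

/-!
Each vertex is colored by the state of its component at the moment of its arrival, together with a
bit that tells the two sides of this component apart.

An adversary makes every on-line algorithm use `k` colors on one side of a tower of height `k`. If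
two such copies of the tower get different sets of colors, then their union has one color more.
Otherwise one of them is reversed, so that the next apex is joined to all these colors and needs a
new one. Hence no tower in `G` is higher than `χ*(G)`.

The state consists of the height `r` of the highest tower in the component, of a stage `j` and of
an amplification `q ≤ 2`. A merger is a vertex that joined two components each containing two
doubles of the tower of height `r`, and `j` is the height of the highest tower made of mergers.
Where `j = 0`, the tower of height `r` stands in for it. The amplification tells whether one finds
only this tower, or also its double, or even two doubles.

The bit refers to such a tower in the component of the leader, the first vertex of the component
that had the same state. It is consistent unless two components with equal states but opposite
references are joined by a vertex `y` without a change of state. For `q = 0` the two references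
form a double, and for `q = 1` there are now two doubles, so `q` has grown. For `q = 2` the vertex
`y` is a merger, and since `G` is `P₉`-free, in one of the two components no induced path on five
vertices starts at `y`. Then `y` is adjacent to all mergers on the opposite side of this
component, as otherwise the component would contain a tower of height `r + 1`. So `y` is the apex
of a tower of mergers of height `j + 1`, and `j` has grown.
-/

/-! ### Bicolored graphs and the towers -/

/-- The two-coloring with the two colors exchanged. -/
def swapColors {V : Type*} {G : SimpleGraph V} (c : G.Coloring Bool) : G.Coloring Bool :=
  .mk (fun x => !c x) fun h => by simpa using c.valid h

@[simp]
theorem swapColors_apply {V : Type*} {G : SimpleGraph V} (c : G.Coloring Bool) (x : V) :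
    swapColors c x = !c x := rfl

theorem coloring_eq_not_of_adj {V : Type*} {G : SimpleGraph V} (c : G.Coloring Bool) {x y : V}
    (h : G.Adj x y) : c y = !c x :=
  Bool.eq_not_of_ne (c.valid h.symm)

/-- A graph together with a proper two-coloring of its vertices into a `true` and a `false` side. -/
structure BicoloredGraph where
  V : Type
  graph : SimpleGraph V
  side : graph.Coloring Bool

namespace BicoloredGraph

variable (H H₁ H₂ : BicoloredGraph)

/-- The bicolored graph without vertices. -/
protected def empty : BicoloredGraph where
  V := Empty
  graph := ⊥
  side := .mk Empty.elim fun {x} => x.elim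

/-- The same graph with its two sides exchanged. -/
def flip : BicoloredGraph where
  V := H.V
  graph := H.graph
  side := swapColors H.side

/-- The disjoint union of two bicolored graphs. -/
def sum : BicoloredGraph where
  V := H₁.V ⊕ H₂.V
  graph := H₁.graph ⊕g H₂.graph
  side := H₁.side.sum H₂.side

/-- `H` with a new vertex `none`, its apex, on the `false` side, joined to the whole `true` side. -/
def cone : BicoloredGraph where
  V := Option H.V
  graph :=
    { Adj
        | none, none => False
        | none, some x | some x, none => H.side x = true
        | some x, some y => H.graph.Adj x y
      symm := ⟨by
        rintro (_ | x) (_ | y) h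
        exacts [h, h, h, h.symm]⟩
      loopless := ⟨by
        rintro (_ | x) h
        exacts [h, h.ne rfl]⟩ }
  side := .mk (fun o => o.elim false H.side) (by
    rintro (_ | x) (_ | y) h
    exacts [h.elim, (h ▸ Bool.false_ne_true : false ≠ H.side y),
      (h ▸ Bool.false_ne_true.symm : H.side x ≠ false), H.side.valid h])

/-- `H` together with a disjoint copy of `H` whose sides are exchanged. -/
def double : BicoloredGraph := H.sum H.flip

/-- Two disjoint copies of the double of `H`. -/
def quadruple : BicoloredGraph := H.double.sum H.double

/-- The tower of height `k`, which forces every on-line algorithm to use `k` colors: the apex of the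
next tower is joined to the `true` sides of two doubles of the previous one. -/
def tower : ℕ → BicoloredGraph
  | 0 => .empty
  | k + 1 => (tower k).quadruple.cone

/-- Some automorphism of the graph exchanges the two sides. -/
def Reversible : Prop :=
  ∃ ψ : H.graph ≃g H.graph, ∀ x, H.side (ψ x) = !H.side x

theorem reversible_double : H.double.Reversible :=
  ⟨SimpleGraph.Iso.sumComm, Sum.rec (fun _ => rfl) fun _ => (Bool.not_not _).symm⟩

variable {H₁ H₂} in
theorem Reversible.sum : H₁.Reversible → H₂.Reversible → (H₁.sum H₂).Reversible := by
  rintro ⟨ψ₁, h₁⟩ ⟨ψ₂, h₂⟩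
  exact ⟨ψ₁.sumCongr ψ₂, Sum.rec h₁ h₂⟩

theorem reversible_quadruple : H.quadruple.Reversible :=
  H.reversible_double.sum H.reversible_double

instance : IsEmpty BicoloredGraph.empty.V := inferInstanceAs (IsEmpty Empty)

instance : IsEmpty (tower 0).V := inferInstanceAs (IsEmpty Empty)

instance [IsEmpty H.V] : IsEmpty H.quadruple.V :=
  inferInstanceAs (IsEmpty ((H.V ⊕ H.V) ⊕ (H.V ⊕ H.V)))

theorem exists_fin_embedding_tower (k : ℕ) : Nonempty (Fin k ↪ (tower k).V) := by
  induction k with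
  | zero => exact ⟨Function.Embedding.ofIsEmpty⟩
  | succ k ih =>
    obtain ⟨e⟩ := ih
    exact ⟨(finSuccEquiv k).toEmbedding.trans
      (e.trans (Function.Embedding.inl.trans Function.Embedding.inl)).optionMap⟩

end BicoloredGraph

open BicoloredGraph

section Embedding

variable {V : Type*} {G : SimpleGraph V}

/-- Two embeddings whose images are disjoint and not joined by an edge combine to an embedding of
the disjoint union. -/
def sumEmbedding {V₁ V₂ : Type*} {G₁ : SimpleGraph V₁} {G₂ : SimpleGraph V₂} (φ₁ : G₁ ↪g G)
    (φ₂ : G₂ ↪g G) (h : ∀ x y, Gᶜ.Adj (φ₁ x) (φ₂ y)) : G₁ ⊕g G₂ ↪g G where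
  toFun := Sum.elim φ₁ φ₂
  inj' := φ₁.injective.sumElim φ₂.injective fun x y => (h x y).ne
  map_rel_iff' := by
    rintro (x | x) (y | y)
    · exact φ₁.map_adj_iff
    · simpa using ((G.compl_adj _ _).1 (h x y)).2
    · simpa using ((G.compl_adj _ _).1 (h y x).symm).2
    · exact φ₂.map_adj_iff

/-- An embedding of `H` extends to its cone by a vertex that is adjacent exactly to the `true`
side. -/
def coneEmbedding {H : BicoloredGraph} (φ : H.graph ↪g G) (u : V) (hu : ∀ x, φ x ≠ u)
    (hadj : ∀ x, G.Adj u (φ x) ↔ H.side x = true) : H.cone.graph ↪g G where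
  toFun o := o.elim u φ
  inj' := by
    rintro (_ | x) (_ | y) h
    exacts [rfl, (hu y h.symm).elim, (hu x h).elim, congrArg some (φ.injective h)]
  map_rel_iff' := by
    rintro (_ | x) (_ | y)
    exacts [iff_of_false G.irrefl id, hadj y, (G.adj_comm _ _).trans (hadj x), φ.map_adj_iff]

end Embedding

/-! ### Copies of a bicolored graph -/

section HasCopy

variable {V : Type*} {G : SimpleGraph V} {f f' : V → Bool} {Q Q' Q₁ Q₂ : Set V}
  {H H₁ H₂ : BicoloredGraph}

/-- `G` has an induced copy of `H` inside `Q` on which `f` is the two-coloring of `H`. -/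
def HasCopy (G : SimpleGraph V) (f : V → Bool) (Q : Set V) (H : BicoloredGraph) : Prop :=
  ∃ φ : H.graph ↪g G, (∀ x, f (φ x) = H.side x) ∧ ∀ x, φ x ∈ Q

theorem HasCopy.mono (h : HasCopy G f Q H) (hQ : Q ⊆ Q') : HasCopy G f Q' H := by
  obtain ⟨φ, hf, hφ⟩ := h
  exact ⟨φ, hf, fun x => hQ (hφ x)⟩

theorem HasCopy.congr (h : HasCopy G f Q H) (hf : Set.EqOn f f' Q) : HasCopy G f' Q H := by
  obtain ⟨φ, hφf, hφ⟩ := h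
  exact ⟨φ, fun x => (hf (hφ x)).symm.trans (hφf x), hφ⟩

theorem HasCopy.flip (h : HasCopy G (fun z => !f z) Q H) : HasCopy G f Q H.flip := by
  obtain ⟨φ, hf, hφ⟩ := h
  exact ⟨φ, fun x => Bool.not_eq_eq_eq_not.1 (hf x), hφ⟩

theorem HasCopy.reverse (h : HasCopy G f Q H) (hH : H.Reversible) :
    HasCopy G (fun z => !f z) Q H := by
  obtain ⟨φ, hf, hφ⟩ := h
  obtain ⟨ψ, hψ⟩ := hH
  exact ⟨φ.comp ψ.toEmbedding, fun x => by simp [hf, hψ], fun x => hφ _⟩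

theorem HasCopy.sum (h₁ : HasCopy G f Q₁ H₁) (h₂ : HasCopy G f Q₂ H₂)
    (hQ : Gᶜ.IsCompleteBetween Q₁ Q₂) : HasCopy G f (Q₁ ∪ Q₂) (H₁.sum H₂) := by
  obtain ⟨φ₁, hf₁, hφ₁⟩ := h₁
  obtain ⟨φ₂, hf₂, hφ₂⟩ := h₂
  exact ⟨sumEmbedding φ₁ φ₂ fun x y => hQ (hφ₁ x) (hφ₂ y), Sum.rec hf₁ hf₂,
    Sum.rec (fun x => .inl (hφ₁ x)) fun x => .inr (hφ₂ x)⟩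

theorem HasCopy.cone {c : G.Coloring Bool} {u : V} (h : HasCopy G c Q H) (huQ : u ∉ Q)
    (hu : c u = false) (hadj : ∀ z ∈ Q, c z = true → G.Adj u z) :
    HasCopy G c (insert u Q) H.cone := by
  obtain ⟨φ, hc, hφ⟩ := h
  refine ⟨coneEmbedding φ u (fun x hx => huQ (hx ▸ hφ x)) fun x => ⟨fun hux => ?_, fun hx =>
    hadj _ (hφ x) ((hc x).trans hx)⟩, ?_, ?_⟩
  · simpa [hu, hc] using c.valid hux
  · rintro (_ | x)
    exacts [hu, hc x]
  · rintro (_ | x)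
    exacts [Set.mem_insert u Q, Set.mem_insert_of_mem u (hφ x)]

theorem hasCopy_of_isEmpty [IsEmpty H.V] : HasCopy G f Q H :=
  ⟨.ofIsEmpty .., isEmptyElim, isEmptyElim⟩

end HasCopy

/-! ### Presentations and the lower bound -/

section Truncate

variable {G G' : SimpleGraph ℕ} {m n x y : ℕ}

/-- The graph on `ℕ` whose edges are those of `G` between numbers less than `n`. It encodes what an
on-line algorithm knows once the vertices `0, …, n - 1` have been presented. -/
def truncate (G : SimpleGraph ℕ) (n : ℕ) : SimpleGraph ℕ where
  Adj x y := x < n ∧ y < n ∧ G.Adj x y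
  symm := ⟨fun _ _ h => ⟨h.2.1, h.1, h.2.2.symm⟩⟩
  loopless := ⟨fun _ h => h.2.2.ne rfl⟩

@[simp]
theorem truncate_adj : (truncate G n).Adj x y ↔ x < n ∧ y < n ∧ G.Adj x y := Iff.rfl

theorem truncate_le : truncate G n ≤ G := fun _ _ h => h.2.2

theorem truncate_truncate (h : m ≤ n) : truncate (truncate G n) m = truncate G m := by
  ext x y
  simp only [truncate_adj]
  grind

theorem truncate_eq_of_le (hG : truncate G' n = truncate G n) (h : m ≤ n) :
    truncate G' m = truncate G m := by
  rw [← truncate_truncate h, hG, truncate_truncate h]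

theorem adj_iff_of_truncate_eq (hG : truncate G' n = truncate G n) (hx : x < n) (hy : y < n) :
    G'.Adj x y ↔ G.Adj x y := by
  simpa [hx, hy] using congrArg (fun K => K.Adj x y) hG

/-- An embedding into the vertices below `n`, as one into another graph with the same edges
there. -/
def transferEmbedding {V : Type*} {H : SimpleGraph V} (φ : H ↪g G) (hφ : ∀ x, φ x < n)
    (hG : truncate G' n = truncate G n) : H ↪g G' where
  toEmbedding := φ.toEmbedding
  map_rel_iff' := (adj_iff_of_truncate_eq hG (hφ _) (hφ _)).trans φ.map_adj_iff

theorem exists_truncate_eq_adj_iff (G : SimpleGraph ℕ) (n : ℕ) (S : Set ℕ) :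
    ∃ G', truncate G' n = truncate G n ∧ ∀ x < n, G'.Adj n x ↔ x ∈ S := by
  refine ⟨truncate G n ⊔ .fromRel fun x y => x = n ∧ y ∈ S, ?_, fun x hx => ?_⟩
  · ext x y
    simp only [truncate_adj, SimpleGraph.sup_adj, SimpleGraph.fromRel_adj]
    grind
  · simp [hx.ne, hx.ne']

end Truncate

/-- The color that `A` gives to the vertex `i` when the vertices of `G` are presented in their
natural order. -/
def color (A : OnlineAlg) (G : SimpleGraph ℕ) (i : ℕ) : ℕ :=
  A i (G.comap (Fin.val : Fin (i + 1) → ℕ))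

section Color

variable {A : OnlineAlg} {G G' : SimpleGraph ℕ} {i j n : ℕ}

theorem color_congr (hG : truncate G' n = truncate G n) (hi : i < n) :
    color A G' i = color A G i := by
  have : G'.comap (Fin.val : Fin (i + 1) → ℕ) = G.comap Fin.val := by
    ext x y
    exact adj_iff_of_truncate_eq hG (by lia) (by lia)
  rw [color, this, color]

theorem runColor_eq_color (H : SimpleGraph (Fin n)) (i : Fin n) :
    runColor A H i = color A (H.map Fin.valEmbedding) i := by
  conv_lhs => rw [← H.comap_map_eq Fin.valEmbedding]
  rfl

theorem color_ne (hA : IsProperAlg A) (h : G.Adj i j) : color A G i ≠ color A G j :=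
  hA (max i j + 1) (G.comap Fin.val) ⟨i, by lia⟩ ⟨j, by lia⟩ h

end Color

/-- The vertices presented at the times `m, …, n - 1` form a copy of `H` without edges to the
earlier vertices, and `A` uses all colors of `F` on the `false` side and all colors of `T` on the
`true` side of that copy. -/
def Shows (A : OnlineAlg) (G : SimpleGraph ℕ) (m n : ℕ) (H : BicoloredGraph) (F T : Finset ℕ) :
    Prop :=
  m ≤ n ∧ ∃ φ : H.graph ↪g G, Set.range φ = Set.Ico m n ∧
    (∀ x < m, ∀ y ∈ Set.Ico m n, ¬G.Adj x y) ∧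
    (∀ c ∈ F, ∃ x, H.side x = false ∧ color A G (φ x) = c) ∧
    ∀ c ∈ T, ∃ x, H.side x = true ∧ color A G (φ x) = c

namespace Shows

variable {A : OnlineAlg} {G G' : SimpleGraph ℕ} {m n p : ℕ} {H H₁ H₂ : BicoloredGraph}
  {F F₁ F₂ T T₁ T₂ : Finset ℕ}

theorem congr (h : Shows A G m n H F T) (hG : truncate G' n = truncate G n) :
    Shows A G' m n H F T := by
  obtain ⟨hmn, φ, hrange, hsep, hF, hT⟩ := h
  have hφ (x) : φ x < n := (hrange.le (Set.mem_range_self x)).2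
  refine ⟨hmn, transferEmbedding φ hφ hG, hrange, fun x hx y hy => ?_, fun c hc => ?_,
    fun c hc => ?_⟩
  · rw [adj_iff_of_truncate_eq hG (hx.trans_le hmn) hy.2]
    exact hsep x hx y hy
  · obtain ⟨x, hx, rfl⟩ := hF c hc
    exact ⟨x, hx, color_congr hG (hφ x)⟩
  · obtain ⟨x, hx, rfl⟩ := hT c hc
    exact ⟨x, hx, color_congr hG (hφ x)⟩

theorem flip (h : Shows A G m n H F T) : Shows A G m n H.flip T F := by
  obtain ⟨hmn, φ, hrange, hsep, hF, hT⟩ := h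
  refine ⟨hmn, φ, hrange, hsep, fun c hc => ?_, fun c hc => ?_⟩
  · obtain ⟨x, hx, hxc⟩ := hT c hc
    exact ⟨x, congrArg not hx, hxc⟩
  · obtain ⟨x, hx, hxc⟩ := hF c hc
    exact ⟨x, congrArg not hx, hxc⟩

theorem reverse (h : Shows A G m n H F T) (hH : H.Reversible) : Shows A G m n H T F := by
  obtain ⟨hmn, φ, hrange, hsep, hF, hT⟩ := h
  obtain ⟨ψ, hψ⟩ := hH
  refine ⟨hmn, φ.comp ψ.symm.toEmbedding, (ψ.symm.surjective.range_comp φ).trans hrange, hsep,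
    fun c hc => ?_, fun c hc => ?_⟩
  · obtain ⟨x, hx, hxc⟩ := hT c hc
    exact ⟨ψ x, by simp [hψ, hx], by simpa using hxc⟩
  · obtain ⟨x, hx, hxc⟩ := hF c hc
    exact ⟨ψ x, by simp [hψ, hx], by simpa using hxc⟩

theorem sum (h₁ : Shows A G m n H₁ F₁ T₁) (h₂ : Shows A G n p H₂ F₂ T₂) :
    Shows A G m p (H₁.sum H₂) (F₁ ∪ F₂) (T₁ ∪ T₂) := by
  obtain ⟨hmn, φ₁, hrange₁, hsep₁, hF₁, hT₁⟩ := h₁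
  obtain ⟨hnp, φ₂, hrange₂, hsep₂, hF₂, hT₂⟩ := h₂
  have hφ₁ (x) : φ₁ x < n := (hrange₁.le (Set.mem_range_self x)).2
  have hφ₂ (x) : φ₂ x ∈ Set.Ico n p := hrange₂.le (Set.mem_range_self x)
  refine ⟨hmn.trans hnp, sumEmbedding φ₁ φ₂ fun x y => (G.compl_adj _ _).2
    ⟨((hφ₁ x).trans_le (hφ₂ y).1).ne, hsep₂ _ (hφ₁ x) _ (hφ₂ y)⟩, ?_, fun x hx y hy => ?_,
    fun c hc => ?_, fun c hc => ?_⟩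
  · rw [← Set.Ico_union_Ico_eq_Ico hmn hnp, ← hrange₁, ← hrange₂]
    exact Set.Sum.elim_range φ₁ φ₂
  · rcases lt_or_ge y n with hyn | hyn
    · exact hsep₁ x hx y ⟨hy.1, hyn⟩
    · exact hsep₂ x (hx.trans_le hmn) y ⟨hyn, hy.2⟩
  · rcases Finset.mem_union.1 hc with hc | hc
    · exact (hF₁ c hc).imp' Sum.inl fun _ => id
    · exact (hF₂ c hc).imp' Sum.inr fun _ => id
  · rcases Finset.mem_union.1 hc with hc | hc
    · exact (hT₁ c hc).imp' Sum.inl fun _ => id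
    · exact (hT₂ c hc).imp' Sum.inr fun _ => id

theorem exists_cone (hA : IsProperAlg A) (h : Shows A G m n H F T) :
    ∃ G' c, truncate G' n = truncate G n ∧ c ∉ T ∧ Shows A G' m (n + 1) H.cone (insert c F) T := by
  obtain ⟨hmn, φ, hrange, hsep, hF, hT⟩ := h
  have hφ (x) : φ x ∈ Set.Ico m n := hrange.le (Set.mem_range_self x)
  obtain ⟨G', hG, hadj⟩ := exists_truncate_eq_adj_iff G n (φ '' {x | H.side x = true})
  have hapex (x) : G'.Adj n (φ x) ↔ H.side x = true :=
    (hadj _ (hφ x).2).trans φ.injective.mem_set_image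
  have hcolor (x) : color A G' (φ x) = color A G (φ x) := color_congr hG (hφ x).2
  refine ⟨G', color A G' n, hG, fun hn => ?_, by lia,
    coneEmbedding (transferEmbedding φ (fun x => (hφ x).2) hG) n (fun x => (hφ x).2.ne) hapex,
    ?_, fun x hx y hy hxy => ?_, fun c hc => ?_, fun c hc => ?_⟩
  · obtain ⟨x, hx, hxc⟩ := hT _ hn
    exact color_ne hA ((hapex x).2 hx) (hxc ▸ hcolor x).symm
  · rw [← Set.insert_Ico_right_eq_Ico_add_one hmn, ← hrange]
    exact Option.range_eq _
  · rcases (Nat.lt_add_one_iff.1 hy.2).lt_or_eq with hyn | rfl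
    · exact hsep x hx y ⟨hy.1, hyn⟩ ((adj_iff_of_truncate_eq hG (hx.trans_le hmn) hyn).1 hxy)
    · obtain ⟨z, -, rfl⟩ := (hadj x (hx.trans_le hmn)).1 hxy.symm
      exact (hφ z).1.not_gt hx
  · rcases Finset.mem_insert.1 hc with rfl | hc
    · exact ⟨none, rfl, rfl⟩
    · obtain ⟨x, hx, rfl⟩ := hF c hc
      exact ⟨some x, hx, hcolor x⟩
  · obtain ⟨x, hx, rfl⟩ := hT c hc
    exact ⟨some x, hx, hcolor x⟩

end Shows

/-- Whatever has been presented so far, an adversary can continue the presentation by a copy of `H`,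
not joined to the earlier vertices, on whose `false` side `A` uses at least `k` colors. -/
def Forces (A : OnlineAlg) (H : BicoloredGraph) (k : ℕ) : Prop :=
  ∀ G m, ∃ G' n F T, truncate G' m = truncate G m ∧ k ≤ F.card ∧ Shows A G' m n H F T

section Forces

variable {A : OnlineAlg} {H : BicoloredGraph} {k : ℕ}

theorem forces_empty : Forces A .empty 0 := fun G m =>
  ⟨G, m, ∅, ∅, rfl, le_rfl, le_rfl, .ofIsEmpty .., by rw [Set.range_eq_empty, Set.Ico_self],
    by simp, by simp, by simp⟩

theorem Forces.double (h : Forces A H k) : Forces A H.double k := by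
  intro G m
  obtain ⟨G₁, n, F₁, T₁, hG₁, hk, h₁⟩ := h G m
  obtain ⟨G₂, p, F₂, T₂, hG₂, -, h₂⟩ := h G₁ n
  exact ⟨G₂, p, F₁ ∪ T₂, T₁ ∪ F₂, (truncate_eq_of_le hG₂ h₁.1).trans hG₁,
    hk.trans (Finset.card_le_card Finset.subset_union_left), (h₁.congr hG₂).sum h₂.flip⟩

theorem Forces.sum_cone (h : Forces A H k) (hA : IsProperAlg A) (hH : H.Reversible) :
    Forces A (H.sum H).cone (k + 1) := by
  intro G m
  obtain ⟨G₁, n, F₁, T₁, hG₁, hk₁, h₁⟩ := h G m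
  obtain ⟨G₂, p, F₂, T₂, hG₂, hk₂, h₂⟩ := h G₁ n
  replace h₁ := h₁.congr hG₂
  have hG₂m := (truncate_eq_of_le hG₂ h₁.1).trans hG₁
  have hmp := h₁.1.trans h₂.1
  by_cases hF : F₂ ⊆ F₁
  · obtain ⟨G₃, c, hG₃, hc, h₃⟩ := ((h₁.reverse hH).sum h₂).exists_cone hA
    refine ⟨G₃, p + 1, _, _, (truncate_eq_of_le hG₃ hmp).trans hG₂m, ?_, h₃⟩
    have hcF₂ : c ∉ F₂ := fun hcF => hc (Finset.mem_union_left _ (hF hcF))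
    calc k + 1 ≤ F₂.card + 1 := by lia
      _ = (insert c F₂).card := (Finset.card_insert_of_notMem hcF₂).symm
      _ ≤ (insert c (T₁ ∪ F₂)).card := by gcongr; exact Finset.subset_union_right
  · obtain ⟨G₃, c, hG₃, -, h₃⟩ := (h₁.sum h₂).exists_cone hA
    refine ⟨G₃, p + 1, _, _, (truncate_eq_of_le hG₃ hmp).trans hG₂m, ?_, h₃⟩
    have hlt : F₁ ⊂ F₁ ∪ F₂ := Finset.ssubset_iff_subset_ne.2
      ⟨Finset.subset_union_left, fun h => hF (Finset.union_eq_left.1 h.symm)⟩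
    calc k + 1 ≤ F₁.card + 1 := by lia
      _ ≤ (F₁ ∪ F₂).card := Finset.card_lt_card hlt
      _ ≤ (insert c (F₁ ∪ F₂)).card := Finset.card_le_card (Finset.subset_insert _ _)

theorem forces_tower (hA : IsProperAlg A) (k : ℕ) : Forces A (tower k) k := by
  induction k with
  | zero => exact forces_empty
  | succ k ih => exact ih.double.sum_cone hA (reversible_double _)

end Forces

theorem isProperAlg_fst : IsProperAlg fun k _ => k :=
  fun _ _ _ _ h hij => h.ne (Fin.ext hij)

theorem exists_isProperAlg_numColors_le_onlineChrom (V : Type) [Fintype V] (G : SimpleGraph V) :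
    ∃ A, IsProperAlg A ∧ ∀ (n : ℕ) (π : Fin n ≃ V), numColors A (G.comap π) ≤ onlineChrom V G := by
  refine Nat.sInf_mem (s := {m | ∃ A, IsProperAlg A ∧ ∀ n (π : Fin n ≃ V),
    numColors A (G.comap π) ≤ m}) ⟨Fintype.card V, _, isProperAlg_fst, fun n π => ?_⟩
  calc numColors _ (G.comap π) ≤ (Finset.univ : Finset (Fin n)).card := Finset.card_image_le
    _ = Fintype.card V := Fintype.card_congr π

theorem exists_enumeration_extending {α V : Type*} [Fintype V] {φ : α → V}
    {ψ : α → Fin (Fintype.card V)} (hφ : φ.Injective) (hψ : ψ.Injective) :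
    ∃ π : Fin (Fintype.card V) ≃ V, ∀ x, π (ψ x) = φ x := by
  classical
  obtain ⟨π, hπ⟩ := Set.MapsTo.exists_equiv_extend_of_card_eq (α := V) (t := Finset.univ)
    (Finset.card_fin _).symm (s := Set.range φ) (f := Function.extend φ ψ (Fintype.equivFin V))
    (fun _ _ => Finset.mem_coe.2 (Finset.mem_univ _)) (by
      rintro _ ⟨x, rfl⟩ _ ⟨y, rfl⟩ h
      rw [hφ.extend_apply, hφ.extend_apply] at h
      rw [hψ h])
  refine ⟨(π.trans (Equiv.subtypeUnivEquiv Finset.mem_univ)).symm, fun x => ?_⟩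
  rw [Equiv.symm_apply_eq, Equiv.trans_apply, Equiv.subtypeUnivEquiv_apply,
    hπ _ (Set.mem_range_self x), hφ.extend_apply]

theorem le_onlineChrom_of_tower_embedding {V : Type} [Fintype V] {G : SimpleGraph V} {k : ℕ}
    (φ : (tower k).graph ↪g G) : k ≤ onlineChrom V G := by
  obtain ⟨A, hA, hmin⟩ := exists_isProperAlg_numColors_le_onlineChrom V G
  obtain ⟨G', n, F, T, -, hk, -, ψ, hrange, -, hF, -⟩ := forces_tower hA k ⊥ 0
  have hψn (x) : ψ x < n := (hrange.le (Set.mem_range_self x)).2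
  have hn : n ≤ Fintype.card V := by
    calc n = (Set.range ψ).ncard := by simp [hrange]
      _ = Nat.card (tower k).V := Set.ncard_range_of_injective ψ.injective
      _ ≤ Nat.card V := Nat.card_le_card_of_injective φ φ.injective
      _ = Fintype.card V := Nat.card_eq_fintype_card
  let ψ' (x) : Fin (Fintype.card V) := ⟨ψ x, (hψn x).trans_le hn⟩
  obtain ⟨π, hπ⟩ := exists_enumeration_extending (ψ := ψ') φ.injective
    fun x y h => ψ.injective (congrArg Fin.val h)
  have htrunc : truncate ((G.comap π).map Fin.valEmbedding) n = truncate G' n := by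
    have hadj (x y) : ((G.comap π).map Fin.valEmbedding).Adj (ψ x) (ψ y) ↔ G'.Adj (ψ x) (ψ y) := by
      rw [ψ.map_adj_iff, ← φ.map_adj_iff, ← hπ, ← hπ]
      exact SimpleGraph.map_adj_apply (f := Fin.valEmbedding) (a := ψ' x) (b := ψ' y)
    ext x y
    refine and_congr_right fun hx => and_congr_right fun hy => ?_
    obtain ⟨x, rfl⟩ := hrange.ge ⟨Nat.zero_le _, hx⟩
    obtain ⟨y, rfl⟩ := hrange.ge ⟨Nat.zero_le _, hy⟩
    exact hadj x y
  have hsub : F ⊆ Finset.univ.image (runColor A (G.comap π)) := by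
    intro c hc
    obtain ⟨x, -, rfl⟩ := hF c hc
    refine Finset.mem_image.2 ⟨ψ' x, Finset.mem_univ _, ?_⟩
    rw [runColor_eq_color, color_congr htrunc (hψn x)]
  exact hk.trans ((Finset.card_le_card hsub).trans (hmin _ π))

/-! ### Components and what they contain -/

section Component

variable {V : Type*} {K : SimpleGraph V} {x y z : V}

/-- The vertices of the connected component of `x`. -/
def component (K : SimpleGraph V) (x : V) : Set V := {z | K.Reachable x z}

theorem mem_component_self : x ∈ component K x := .rfl

theorem component_eq (h : z ∈ component K x) : component K z = component K x :=
  Set.ext fun _ => ⟨h.trans, h.symm.trans⟩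

theorem component_mono {K' : SimpleGraph V} (h : K ≤ K') : component K x ⊆ component K' x :=
  fun _ hz => hz.mono h

theorem mem_component_of_adj (hy : y ∈ component K x) (h : K.Adj y z) : z ∈ component K x :=
  hy.trans h.reachable

theorem component_induction {p : ∀ z, z ∈ component K x → Prop} (self : p x mem_component_self)
    (adj : ∀ a ha b hb, K.Adj a b → p a ha → p b hb) {z : V} (hz : z ∈ component K x) : p z hz := by
  have hz' := (SimpleGraph.reachable_iff_reflTransGen x z).1 hz
  induction hz' with
  | refl => exact self
  | tail hxa hab ih =>
    have ha := (SimpleGraph.reachable_iff_reflTransGen x _).2 hxa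
    exact adj _ ha _ hz hab (ih ha)

theorem eqOn_component_or_eqOn_swapColors (f f' : K.Coloring Bool) (x : V) :
    Set.EqOn f f' (component K x) ∨ Set.EqOn f (swapColors f') (component K x) := by
  have hflip : ∀ z ∈ component K x, f x = f' x ↔ f z = f' z := by
    rintro z ⟨p⟩
    have h := f.even_length_iff_congr p
    rw [f'.even_length_iff_congr p] at h
    grind
  by_cases hx : f x = f' x
  · exact .inl fun z hz => (hflip z hz).1 hx
  · exact .inr fun z hz => Bool.eq_not_of_ne (mt (hflip z hz).2 hx)

end Component

section Occurs

variable {V : Type*} {G : SimpleGraph V} {f : V → Bool} {Q Q' : Set V} {H : BicoloredGraph}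

/-- `G` has an induced copy of `H` inside `Q` that `f` colors like `H`, up to an exchange of the two
colors. -/
def Occurs (G : SimpleGraph V) (f : V → Bool) (Q : Set V) (H : BicoloredGraph) : Prop :=
  HasCopy G f Q H ∨ HasCopy G (fun z => !f z) Q H

theorem Occurs.mono (h : Occurs G f Q H) (hQ : Q ⊆ Q') : Occurs G f Q' H :=
  h.imp (·.mono hQ) (·.mono hQ)

theorem Occurs.hasCopy (h : Occurs G f Q H) (hH : H.Reversible) : HasCopy G f Q H :=
  h.elim id fun h => by simpa only [Bool.not_not] using h.reverse hH

theorem Occurs.cone {c : G.Coloring Bool} {u : V} (h : Occurs G c Q H) (hH : H.Reversible)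
    (huQ : u ∉ Q) (hadj : ∀ z ∈ Q, c z ≠ c u → G.Adj u z) : Occurs G c (insert u Q) H.cone := by
  have hcopy := h.hasCopy hH
  cases hu : c u with
  | false => exact .inl (hcopy.cone huQ hu fun z hz hcz => hadj z hz (by simp [hcz, hu]))
  | true =>
    have hcopy' : HasCopy G (swapColors c) Q H := hcopy.reverse hH
    exact .inr (hcopy'.cone huQ (by simp [hu]) fun z hz hcz => hadj z hz (by simp_all))

/-- The component of `x` contains an induced copy of `H` inside `P`, on which a two-coloring of `K`
is that of `H`. -/
def Contains (K : SimpleGraph V) (x : V) (P : Set V) (H : BicoloredGraph) : Prop :=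
  ∃ f : K.Coloring Bool, HasCopy K f (component K x ∩ P) H

end Occurs

/-- The component of `v` at the moment when `v` has just been presented. -/
def cluster (G : SimpleGraph ℕ) (v : ℕ) : Set ℕ := component (truncate G (v + 1)) v

section Truncate

variable {G : SimpleGraph ℕ} {m n u v x y z : ℕ} {f : ℕ → Bool} {P Q : Set ℕ} {H : BicoloredGraph}

theorem truncate_mono (h : m ≤ n) : truncate G m ≤ truncate G n :=
  fun _ _ hxy => ⟨hxy.1.trans_le h, hxy.2.1.trans_le h, hxy.2.2⟩

theorem truncate_truncate_add_one (h : v < n) :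
    truncate (truncate G n) (v + 1) = truncate G (v + 1) := truncate_truncate h

theorem lt_of_mem_component (hx : x < n) (hz : z ∈ component (truncate G n) x) : z < n := by
  induction hz using component_induction with
  | self => exact hx
  | adj _ _ _ _ hab => exact (truncate_adj.1 hab).2.1

theorem hasCopy_truncate_iff (hQ : ∀ z ∈ Q, z < n) :
    HasCopy (truncate G n) f Q H ↔ HasCopy G f Q H := by
  have hG := truncate_truncate (G := G) (le_refl n)
  constructor
  · rintro ⟨φ, hf, hφ⟩
    exact ⟨transferEmbedding φ (fun x => hQ _ (hφ x)) hG.symm, hf, hφ⟩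
  · rintro ⟨φ, hf, hφ⟩
    exact ⟨transferEmbedding φ (fun x => hQ _ (hφ x)) hG, hf, hφ⟩

/-- The restriction of a two-coloring to a truncated graph. -/
def restrictColoring (c : G.Coloring Bool) (n : ℕ) : (truncate G n).Coloring Bool :=
  c.comp (.ofLE truncate_le)

@[simp]
theorem restrictColoring_apply (c : G.Coloring Bool) : restrictColoring c n x = c x := rfl

theorem contains_truncate_iff (c : G.Coloring Bool) (hx : x < n) :
    Contains (truncate G n) x P H ↔ Occurs G c (component (truncate G n) x ∩ P) H := by
  have hlt : ∀ z ∈ component (truncate G n) x ∩ P, z < n := fun z hz =>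
    lt_of_mem_component hx hz.1
  constructor
  · rintro ⟨f, h⟩
    rw [hasCopy_truncate_iff hlt] at h
    exact (eqOn_component_or_eqOn_swapColors f (restrictColoring c n) x).imp
      (fun hf => h.congr (hf.mono Set.inter_subset_left))
      (fun hf => h.congr (hf.mono Set.inter_subset_left))
  · rintro (h | h) <;> rw [← hasCopy_truncate_iff hlt] at h
    exacts [⟨restrictColoring c n, h⟩, ⟨swapColors (restrictColoring c n), h⟩]

theorem le_of_contains_tower {k : ℕ} (hx : x < n) (h : Contains (truncate G n) x P (tower k)) :
    k ≤ n := by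
  obtain ⟨_, φ, -, hφ⟩ := h
  obtain ⟨e⟩ := exists_fin_embedding_tower k
  simpa using Fintype.card_le_of_injective
    (fun i => (⟨φ (e i), lt_of_mem_component hx (hφ _).1⟩ : Fin n))
    fun i j hij => e.injective (φ.injective (congrArg Fin.val hij))

theorem lt_of_mem_cluster (h : z ∈ cluster G v) : z < v + 1 :=
  lt_of_mem_component v.lt_succ_self h

theorem cluster_subset_component (hu : u ∈ component (truncate G n) x) (hun : u < n) :
    cluster G u ⊆ component (truncate G n) x :=
  (component_mono (truncate_mono hun)).trans (component_eq hu).le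

theorem cluster_subset_cluster (h : u ∈ cluster G v) : cluster G u ⊆ cluster G v :=
  cluster_subset_component h (lt_of_mem_cluster h)

theorem isCompleteBetween_component (hx : x < n) (hy : y < n)
    (h : ¬(truncate G n).Reachable x y) :
    Gᶜ.IsCompleteBetween (component (truncate G n) x) (component (truncate G n) y) := by
  intro a ha b hb
  refine (G.compl_adj _ _).2 ⟨?_, fun hab => ?_⟩
  · rintro rfl
    exact h (ha.trans hb.symm)
  · have hadj : (truncate G n).Adj a b :=
      ⟨lt_of_mem_component hx ha, lt_of_mem_component hy hb, hab⟩
    exact h ((mem_component_of_adj ha hadj).trans hb.symm)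

theorem lt_of_reachable_truncate (h : (truncate G n).Reachable u v) (huv : u ≠ v) : u < n := by
  obtain ⟨_ | ⟨hadj, _⟩⟩ := h
  exacts [(huv rfl).elim, hadj.1]

/-- On its arrival `y` joins the components of the earlier vertices `u` and `v`. -/
structure Joins (G : SimpleGraph ℕ) (y u v : ℕ) : Prop where
  left_lt : u < y
  right_lt : v < y
  not_reachable : ¬(truncate G y).Reachable u v
  reachable : (truncate G (y + 1)).Reachable u v

theorem Joins.symm (h : Joins G y u v) : Joins G y v u :=
  ⟨h.right_lt, h.left_lt, fun h' => h.not_reachable h'.symm, h.reachable.symm⟩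

theorem Joins.exists_adj (h : Joins G y u v) :
    ∃ a < y, G.Adj y a ∧ a ∈ component (truncate G y) u := by
  by_contra! hnone
  have hv : v ∈ component (truncate G (y + 1)) u := h.reachable
  refine h.not_reachable ?_
  suffices v ∈ component (truncate G y) u from this
  have hu := h.left_lt
  clear h
  induction hv using component_induction with
  | self => exact mem_component_self
  | adj a _ b _ hab ih =>
    have hay := lt_of_mem_component hu ih
    rcases (Nat.lt_add_one_iff.1 hab.2.1).lt_or_eq with hby | rfl
    · exact mem_component_of_adj ih ⟨hay, hby, hab.2.2⟩
    · exact (hnone a hay hab.2.2.symm ih).elim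

theorem mem_cluster_of_adj (h : x < v) (hadj : G.Adj v x) : x ∈ cluster G v :=
  mem_component_of_adj mem_component_self ⟨v.lt_succ_self, h.trans v.lt_succ_self, hadj⟩

theorem component_subset_cluster_of_adj (h : x < v) (hadj : G.Adj v x) :
    component (truncate G v) x ⊆ cluster G v :=
  (component_mono (truncate_mono v.le_succ)).trans (component_eq (mem_cluster_of_adj h hadj)).le

theorem Joins.component_subset_cluster (h : Joins G y u v) :
    component (truncate G y) u ⊆ cluster G y := by
  obtain ⟨a, hay, hya, ha⟩ := h.exists_adj
  exact component_eq ha ▸ component_subset_cluster_of_adj hay hya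

end Truncate

/-! ### The state of a vertex -/

/-- The vertices that on their arrival joined two components both of which contained two doubles of
the tower of height `r`. -/
def mergers (G : SimpleGraph ℕ) (r : ℕ) : Set ℕ :=
  {w | ∃ x₁ x₂, Joins G w x₁ x₂ ∧ ∀ x ∈ ({x₁, x₂} : Set ℕ),
    Contains (truncate G w) x Set.univ (tower r).quadruple}

/-- The vertices among which the copies that count for stage `j` are sought. -/
def stageSet (G : SimpleGraph ℕ) (r : ℕ) : ℕ → Set ℕ
  | 0 => Set.univ
  | _ + 1 => mergers G r

/-- The height of the towers that count for stage `j` at level `r`. -/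
def stageHeight (r : ℕ) : ℕ → ℕ
  | 0 => r
  | j + 1 => j + 1

/-- `H`, its double, and two copies of its double, for `q = 0`, `q = 1` and `q ≥ 2`. -/
def amplify (H : BicoloredGraph) : ℕ → BicoloredGraph
  | 0 => H
  | 1 => H.double
  | _ + 2 => H.quadruple

/-- The component of `x` in `K` contains, at level `r` and stage `j`, the `q`-th amplification of
the tower of that stage. -/
def Reaches (K : SimpleGraph ℕ) (x r j q : ℕ) : Prop :=
  Contains K x (stageSet K r j) (amplify (tower (stageHeight r j)) q)

open Classical in
/-- The height of the highest tower in the cluster of `v`. The search may end at `v + 1`, since a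
tower has at least as many vertices as its height. -/
noncomputable def level (G : SimpleGraph ℕ) (v : ℕ) : ℕ :=
  Nat.findGreatest (fun k => Contains (truncate G (v + 1)) v Set.univ (tower k)) (v + 1)

open Classical in
/-- The highest stage reached by the cluster of `v` at its level. The search may end at `v + 1`,
as for `level`. -/
noncomputable def stage (G : SimpleGraph ℕ) (v : ℕ) : ℕ :=
  Nat.findGreatest (fun j => Reaches (truncate G (v + 1)) v (level G v) j 0) (v + 1)

open Classical in
/-- The largest amplification, up to `2`, reached by the cluster of `v` at its level and stage. -/
noncomputable def amplification (G : SimpleGraph ℕ) (v : ℕ) : ℕ :=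
  Nat.findGreatest (fun q => Reaches (truncate G (v + 1)) v (level G v) (stage G v) q) 2

/-- The part of the color of `v` that depends on its cluster only. -/
noncomputable def state (G : SimpleGraph ℕ) (v : ℕ) : ℕ × ℕ × ℕ :=
  (level G v, stage G v, amplification G v)

/-- The first vertex of the cluster of `v` that had the same state as `v`. -/
noncomputable def leader (G : SimpleGraph ℕ) (v : ℕ) : ℕ :=
  sInf {x ∈ cluster G v | state G x = state G v}

/-- `u` is the first vertex of its cluster that had the same state as `u`. -/
def IsLeader (G : SimpleGraph ℕ) (u : ℕ) : Prop :=
  ∀ x ∈ cluster G u, state G x = state G u → u ≤ x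

/-- The two-coloring that makes `u` `true` is the one of a copy of the tower of the stage of `u` in
the cluster of `u`. -/
def Positive (G : SimpleGraph ℕ) (u : ℕ) : Prop :=
  ∃ f : (truncate G (u + 1)).Coloring Bool, f u = true ∧
    HasCopy (truncate G (u + 1)) f (cluster G u ∩ stageSet (truncate G (u + 1)) (level G u)
      (stage G u)) (tower (stageHeight (level G u) (stage G u)))

/-- `v` is on the `true` side of its cluster when the latter is two-colored as prescribed by the
tower of its leader. -/
def Bright (G : SimpleGraph ℕ) (v : ℕ) : Prop :=
  ∃ f : (truncate G (v + 1)).Coloring Bool,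
    f v = true ∧ (f (leader G v) = true ↔ Positive G (leader G v))

open Classical in
/-- The information on `v` that determines its color. -/
noncomputable def label (G : SimpleGraph ℕ) (v : ℕ) : (ℕ × ℕ × ℕ) × Bool :=
  (state G v, decide (Bright G v))

section Locality

variable {G : SimpleGraph ℕ} {n r v w : ℕ}

theorem joins_truncate_iff {x₁ x₂ : ℕ} :
    Joins (truncate G n) w x₁ x₂ ↔ w < n ∧ Joins G w x₁ x₂ := by
  by_cases hw : w < n
  · have h₁ := truncate_truncate (G := G) hw.le
    have h₂ := truncate_truncate_add_one (G := G) hw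
    exact ⟨fun ⟨hx₁, hx₂, h, h'⟩ => ⟨hw, hx₁, hx₂, h₁ ▸ h, h₂ ▸ h'⟩,
      fun ⟨_, hx₁, hx₂, h, h'⟩ => ⟨hx₁, hx₂, h₁.symm ▸ h, h₂.symm ▸ h'⟩⟩
  · refine iff_of_false (fun h => ?_) fun h => hw h.1
    obtain ⟨a, -, hwa, -⟩ := h.exists_adj
    exact hw hwa.1

theorem mem_mergers_truncate : w ∈ mergers (truncate G n) r ↔ w < n ∧ w ∈ mergers G r := by
  by_cases hw : w < n
  · simp only [mergers, Set.mem_ofPred_eq, truncate_truncate hw.le, joins_truncate_iff, hw,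
      true_and]
  · simp [mergers, joins_truncate_iff, hw]

theorem inter_stageSet_truncate {Q : Set ℕ} (hQ : ∀ z ∈ Q, z < n) (j : ℕ) :
    Q ∩ stageSet (truncate G n) r j = Q ∩ stageSet G r j := by
  cases j with
  | zero => rfl
  | succ j =>
    ext z
    simp only [stageSet, Set.mem_inter_iff, mem_mergers_truncate]
    grind

theorem cluster_truncate (hv : v < n) : cluster (truncate G n) v = cluster G v := by
  rw [cluster, truncate_truncate hv, cluster]

theorem level_truncate (hv : v < n) : level (truncate G n) v = level G v := by
  rw [level, truncate_truncate_add_one hv, level]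

theorem stage_truncate (hv : v < n) : stage (truncate G n) v = stage G v := by
  rw [stage, truncate_truncate_add_one hv, level_truncate hv, stage]

theorem amplification_truncate (hv : v < n) :
    amplification (truncate G n) v = amplification G v := by
  rw [amplification, truncate_truncate_add_one hv, level_truncate hv, stage_truncate hv,
    amplification]

theorem state_truncate (hv : v < n) : state (truncate G n) v = state G v := by
  rw [state, level_truncate hv, stage_truncate hv, amplification_truncate hv, state]

theorem leader_truncate (hv : v < n) : leader (truncate G n) v = leader G v := by
  rw [leader, cluster_truncate hv, leader]
  congr 1
  ext x
  refine and_congr_right fun hx => ?_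
  rw [state_truncate hv, state_truncate ((lt_of_mem_cluster hx).trans_le hv)]

theorem positive_truncate (hv : v < n) : Positive (truncate G n) v ↔ Positive G v := by
  rw [Positive, truncate_truncate_add_one hv, cluster_truncate hv, level_truncate hv,
    stage_truncate hv, Positive]

theorem leader_mem (G : SimpleGraph ℕ) (v : ℕ) :
    leader G v ∈ {x ∈ cluster G v | state G x = state G v} :=
  Nat.sInf_mem (s := {x ∈ cluster G v | state G x = state G v}) ⟨v, mem_component_self, rfl⟩

theorem leader_mem_cluster : leader G v ∈ cluster G v := (leader_mem G v).1

theorem state_leader : state G (leader G v) = state G v := (leader_mem G v).2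

theorem isLeader_leader (G : SimpleGraph ℕ) (v : ℕ) : IsLeader G (leader G v) := fun _ hx hstate =>
  Nat.sInf_le ⟨cluster_subset_cluster leader_mem_cluster hx, hstate.trans state_leader⟩

theorem bright_truncate (hv : v < n) : Bright (truncate G n) v ↔ Bright G v := by
  have hleader : leader G v < n := (lt_of_mem_cluster leader_mem_cluster).trans_le hv
  rw [Bright, truncate_truncate_add_one hv, leader_truncate hv, positive_truncate hleader, Bright]

theorem label_truncate (hv : v < n) : label (truncate G n) v = label G v := by
  rw [label, state_truncate hv, decide_eq_decide.2 (bright_truncate hv), label]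

end Locality

section Spec

variable {G : SimpleGraph ℕ} {n r j q u v x : ℕ}

theorem reaches_truncate_iff (c : G.Coloring Bool) (hx : x < n) :
    Reaches (truncate G n) x r j q ↔ Occurs G c (component (truncate G n) x ∩ stageSet G r j)
      (amplify (tower (stageHeight r j)) q) := by
  rw [Reaches, contains_truncate_iff c hx,
    inter_stageSet_truncate fun z hz => lt_of_mem_component hx hz]

theorem occurs_tower_level (c : G.Coloring Bool) (v : ℕ) :
    Occurs G c (cluster G v) (tower (level G v)) := by
  classical
  have h := Nat.findGreatest_spec (P := fun k => Contains (truncate G (v + 1)) v Set.univ (tower k))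
    (Nat.zero_le (v + 1)) ⟨restrictColoring c _, hasCopy_of_isEmpty⟩
  exact (((contains_truncate_iff c v.lt_succ_self).1 h).mono Set.inter_subset_left)

theorem not_occurs_tower_level_add_one (c : G.Coloring Bool) (v : ℕ) :
    ¬Occurs G c (cluster G v) (tower (level G v + 1)) := by
  classical
  intro h
  have h' : Contains (truncate G (v + 1)) v Set.univ (tower (level G v + 1)) :=
    (contains_truncate_iff c v.lt_succ_self).2 (by rwa [Set.inter_univ])
  exact Nat.findGreatest_is_greatest (Nat.lt_succ_self (level G v))
    (le_of_contains_tower v.lt_succ_self h') h'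

theorem reaches_stage (c : G.Coloring Bool) (v : ℕ) :
    Reaches (truncate G (v + 1)) v (level G v) (stage G v) 0 := by
  classical
  refine Nat.findGreatest_spec (P := fun j => Reaches (truncate G (v + 1)) v (level G v) j 0)
    (Nat.zero_le (v + 1)) ((reaches_truncate_iff c v.lt_succ_self).2 ?_)
  exact (occurs_tower_level c v).mono (Set.subset_inter subset_rfl (Set.subset_univ _))

theorem not_reaches_stage_add_one (G : SimpleGraph ℕ) (v : ℕ) :
    ¬Reaches (truncate G (v + 1)) v (level G v) (stage G v + 1) 0 := by
  classical
  exact fun h => Nat.findGreatest_is_greatest (Nat.lt_succ_self (stage G v))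
    (le_of_contains_tower v.lt_succ_self h) h

theorem reaches_amplification (c : G.Coloring Bool) (v : ℕ) :
    Reaches (truncate G (v + 1)) v (level G v) (stage G v) (amplification G v) := by
  classical
  exact Nat.findGreatest_spec (P := Reaches (truncate G (v + 1)) v (level G v) (stage G v))
    (Nat.zero_le 2) (reaches_stage c v)

theorem amplification_le_two (G : SimpleGraph ℕ) (v : ℕ) : amplification G v ≤ 2 := by
  classical
  exact Nat.findGreatest_le 2

theorem not_reaches_amplification_add_one (h : amplification G v < 2) :
    ¬Reaches (truncate G (v + 1)) v (level G v) (stage G v) (amplification G v + 1) := by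
  classical
  exact Nat.findGreatest_is_greatest (Nat.lt_succ_self (amplification G v)) h

theorem hasCopy_of_iff_positive (c : G.Coloring Bool) (h : c u = true ↔ Positive G u) :
    HasCopy G c (cluster G u ∩ stageSet G (level G u) (stage G u))
      (tower (stageHeight (level G u) (stage G u))) := by
  have hlt : ∀ z ∈ cluster G u ∩ stageSet G (level G u) (stage G u), z < u + 1 := fun z hz =>
    lt_of_mem_cluster hz.1
  have hstage := inter_stageSet_truncate (G := G) (r := level G u)
    (fun z (hz : z ∈ cluster G u) => lt_of_mem_cluster hz) (stage G u)
  rcases (reaches_truncate_iff c u.lt_succ_self).1 (reaches_stage c u) with hcopy | hcopy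
  · exact hcopy
  · by_cases hu : c u = true
    · obtain ⟨f, hfu, hf⟩ := h.1 hu
      rw [hstage, hasCopy_truncate_iff hlt] at hf
      rcases eqOn_component_or_eqOn_swapColors f (restrictColoring c _) u with hfc | hfc
      · exact hf.congr (hfc.mono Set.inter_subset_left)
      · have := hfc mem_component_self
        simp [hu, hfu] at this
    · have hswap : swapColors (restrictColoring c (u + 1)) u = true := by simpa using hu
      exact (hu (h.2 ⟨_, hswap, by rwa [hstage, hasCopy_truncate_iff hlt]⟩)).elim

theorem bright_iff (c : G.Coloring Bool) :
    Bright G v ↔ (c v = true ↔ (c (leader G v) = true ↔ Positive G (leader G v))) := by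
  have hleader : leader G v ∈ component (truncate G (v + 1)) v := leader_mem_cluster
  constructor
  · rintro ⟨f, hfv, hf⟩
    rcases eqOn_component_or_eqOn_swapColors f (restrictColoring c _) v with h | h
    all_goals
      have h₁ := h mem_component_self
      have h₂ := h hleader
      simp only [restrictColoring_apply, swapColors_apply] at h₁ h₂
      grind
  · intro h
    by_cases hv : c v = true
    · exact ⟨restrictColoring c _, hv, h.1 hv⟩
    · refine ⟨swapColors (restrictColoring c _), by simpa using hv, ?_⟩
      simp only [restrictColoring_apply, swapColors_apply]
      grind

end Spec

/-! ### Induced paths starting at a vertex -/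

section InducedPath

variable {V : Type*} {G K : SimpleGraph V} {y z e : V} {D D₁ D₂ : Set V}
  {k l : ℕ}

theorem IsInducedPath.append {f : Fin (k + 1) → V} {g : Fin (l + 1) → V}
    (hf : IsInducedPath G (k + 1) f) (hg : IsInducedPath G (l + 1) g) (h₀ : f 0 = g 0)
    (h : ∀ i : Fin k, ∀ j : Fin l, Gᶜ.Adj (f i.succ) (g j.succ)) :
    IsInducedPath G (k + 1 + l) (Fin.append (f ∘ Fin.rev) (g ∘ Fin.succ)) := by
  have hcompl : ∀ i j, f i ≠ g (Fin.succ j) ∧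
      (G.Adj (f i) (g j.succ) ↔ (i.val = 0 ∧ j.val = 0)) := fun i j => by
    induction i using Fin.cases with
    | zero =>
      rw [h₀]
      refine ⟨hg.1.ne (Fin.succ_ne_zero j).symm, ?_⟩
      simp [hg.2, eq_comm]
    | succ i =>
      have := (G.compl_adj _ _).1 (h i j)
      exact ⟨this.1, by simp [this.2]⟩
  constructor
  · exact Fin.append_injective_iff.2 ⟨hf.1.comp Fin.rev_injective,
      hg.1.comp (Fin.succ_injective _), fun i j => (hcompl _ _).1⟩
  · intro a b
    induction a using Fin.addCases <;> induction b using Fin.addCases <;>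
      simp only [Fin.append_left, Fin.append_right, Function.comp_apply, hf.2, hg.2, hcompl,
        G.adj_comm (g _) (f _), Fin.val_rev, Fin.val_succ, Fin.val_castAdd, Fin.val_natAdd] <;>
      lia

/-- No induced path on `n + 1` vertices starts at `y` and continues inside `D`. -/
def PFreeFrom (G : SimpleGraph V) (y : V) (D : Set V) (n : ℕ) : Prop :=
  ¬∃ f : Fin (n + 1) → V, IsInducedPath G (n + 1) f ∧ f 0 = y ∧ ∀ i : Fin n, f i.succ ∈ D

theorem PFreeFrom.mono (h : PFreeFrom G y D₂ k) (hD : D₁ ⊆ D₂) : PFreeFrom G y D₁ k :=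
  fun ⟨f, hf, h₀, hfD⟩ => h ⟨f, hf, h₀, fun i => hD (hfD i)⟩

theorem pFreeFrom_or_pFreeFrom (h : PFree G (k + 1 + l)) (hD : Gᶜ.IsCompleteBetween D₁ D₂) (y : V) :
    PFreeFrom G y D₁ k ∨ PFreeFrom G y D₂ l := by
  by_contra! hpaths
  simp only [PFreeFrom, not_not] at hpaths
  obtain ⟨⟨f, hf, hf₀, hfD⟩, g, hg, hg₀, hgD⟩ := hpaths
  exact h ⟨_, hf.append hg (hf₀.trans hg₀.symm) fun i j => hD (hfD i) (hgD j)⟩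

theorem PFreeFrom.adj_of_walk (h : PFreeFrom G y D 4) (c : G.Coloring Bool) {x₁ x₂ x₃ x₄ : V}
    (hx₁ : x₁ ∈ D) (hx₂ : x₂ ∈ D) (hx₃ : x₃ ∈ D) (hx₄ : x₄ ∈ D) (h₁ : G.Adj y x₁)
    (h₂ : G.Adj x₁ x₂) (h₃ : G.Adj x₂ x₃) (h₄ : G.Adj x₃ x₄) (hyx₃ : ¬G.Adj y x₃) :
    G.Adj x₁ x₄ := by
  by_contra hx₁x₄
  have hadj : ∀ a b : Fin 5, G.Adj (![y, x₁, x₂, x₃, x₄] a) (![y, x₁, x₂, x₃, x₄] b) ↔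
      (a.val + 1 = b.val ∨ b.val + 1 = a.val) := by
    have hc : ∀ {a b}, G.Adj a b → c b = !c a := coloring_eq_not_of_adj c
    have hsymm : ∀ a b, G.Adj a b ↔ G.Adj b a := G.adj_comm
    intro a b
    fin_cases a <;> fin_cases b <;> simp <;> grind
  -- Different vertices of this path have different neighbors, so it is enough to look at the edges.
  have htwins : ∀ a b : Fin 5, (∀ d : Fin 5, (a.val + 1 = d.val ∨ d.val + 1 = a.val) ↔
      (b.val + 1 = d.val ∨ d.val + 1 = b.val)) → a = b := by decide
  refine h ⟨_, ⟨fun a b hab => htwins a b fun d => ?_, hadj⟩, rfl, fun i => ?_⟩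
  · rw [← hadj, ← hadj, hab]
  · fin_cases i <;> assumption

theorem PFreeFrom.exists_adj_adj (h : PFreeFrom G y (component K z) 4) (c : G.Coloring Bool)
    (hK : K ≤ G) (hyz : G.Adj y z) (he : e ∈ component K z) (hc : c e = c y) :
    ∃ x ∈ component K z, G.Adj y x ∧ G.Adj x e := by
  suffices (c e = c y → ∃ x ∈ component K z, G.Adj y x ∧ G.Adj x e) ∧
      (c e ≠ c y → G.Adj y e ∨ ∃ x₁ ∈ component K z, ∃ x₂ ∈ component K z,
        G.Adj y x₁ ∧ G.Adj x₁ x₂ ∧ G.Adj x₂ e) from this.1 hc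
  clear hc
  induction he using component_induction with
  | self => exact ⟨fun hz => (c.valid hyz hz.symm).elim, fun _ => .inl hyz⟩
  | adj a ha b hb hab ih =>
    obtain ⟨hsame, hother⟩ := ih
    have hcab := coloring_eq_not_of_adj c (hK hab)
    refine ⟨fun hcb => ?_, fun hcb => ?_⟩
    · by_cases hya : G.Adj y a
      · exact ⟨a, ha, hya, hK hab⟩
      · obtain ⟨x₁, hx₁, x₂, hx₂, hyx₁, hx₁x₂, hx₂a⟩ :=
          (hother (by grind)).resolve_left hya
        exact ⟨x₁, hx₁, hyx₁, h.adj_of_walk c hx₁ hx₂ ha hb hyx₁ hx₁x₂ hx₂a (hK hab) hya⟩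
    · obtain ⟨x, hx, hyx, hxa⟩ := hsame (by grind)
      exact .inr ⟨x, hx, a, ha, hyx, hxa, hK hab⟩

theorem PFreeFrom.adj_of_mem_component (h : PFreeFrom G y D 4) (c : G.Coloring Bool) (hK : K ≤ G)
    (hKD : component K e ⊆ D) (hy : ∀ t ∈ component K e, ¬G.Adj y t) {u t : V} (hu : u ∈ D)
    (hyu : G.Adj y u) (hue : G.Adj u e) (ht : t ∈ component K e) (hc : c t = c y) :
    G.Adj u t := by
  suffices (c t = c y → G.Adj u t) ∧
      (c t ≠ c y → ∃ s ∈ component K e, G.Adj u s ∧ G.Adj s t) from this.1 hc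
  clear hc
  have hcyu := coloring_eq_not_of_adj c hyu
  have hcue := coloring_eq_not_of_adj c hue
  induction ht using component_induction with
  | self => exact ⟨fun _ => hue, fun he => by grind⟩
  | adj a ha b hb hab ih =>
    obtain ⟨hsame, hother⟩ := ih
    have hcab := coloring_eq_not_of_adj c (hK hab)
    refine ⟨fun hcb => ?_, fun hcb => ⟨a, ha, hsame (by grind), hK hab⟩⟩
    obtain ⟨s, hs, hus, hsa⟩ := hother (by grind)
    exact h.adj_of_walk c hu (hKD hs) (hKD ha) (hKD hb) hyu hus hsa (hK hab) (hy a ha)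

end InducedPath

/-! ### Leaders of equal state agree -/

section Consistency

variable {G : SimpleGraph ℕ} {j r u u' v w y z : ℕ} {Q : Set ℕ}

theorem PFreeFrom.exists_adj_of_not_occurs (c : G.Coloring Bool)
    (hfree : PFreeFrom G y (component (truncate G y) z) 4) (hyz : G.Adj y z) {a : ℕ} (haw : a < w)
    (hsub : component (truncate G w) a ⊆ component (truncate G y) z) (hca : c a = c y)
    (hr : ¬Occurs G c (component (truncate G y) z) (tower (r + 1)))
    (ha : Contains (truncate G w) a Set.univ (tower r).quadruple) :
    ∃ t ∈ component (truncate G w) a, G.Adj y t := by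
  by_contra! hnone
  obtain ⟨u, hu, hyu, hua⟩ :=
    hfree.exists_adj_adj c truncate_le hyz (hsub mem_component_self) hca
  have hcu := coloring_eq_not_of_adj c hyu
  have hocc := ((contains_truncate_iff c haw).1 ha).mono Set.inter_subset_left
  refine hr ((hocc.cone (reversible_quadruple _)
    (fun hua' => hnone u hua' hyu) fun t ht hct => ?_).mono (Set.insert_subset hu hsub))
  exact hfree.adj_of_mem_component c truncate_le hsub hnone hu hyu hua ht (by grind)

theorem PFreeFrom.adj_of_mem_mergers (c : G.Coloring Bool)
    (hfree : PFreeFrom G y (component (truncate G y) z) 4) (hzy : z < y) (hyz : G.Adj y z)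
    (hr : ¬Occurs G c (component (truncate G y) z) (tower (r + 1)))
    (hw : w ∈ component (truncate G y) z) (hwr : w ∈ mergers G r) (hcw : c w ≠ c y) :
    G.Adj y w := by
  by_contra hyw
  obtain ⟨x₁, x₂, hjoin, hx⟩ := hwr
  obtain ⟨a₁, ha₁w, hwa₁, ha₁⟩ := hjoin.exists_adj
  obtain ⟨a₂, ha₂w, hwa₂, ha₂⟩ := hjoin.symm.exists_adj
  have hcluster : cluster G w ⊆ component (truncate G y) z :=
    cluster_subset_component hw (lt_of_mem_component hzy hw)
  have hsub := component_subset_cluster_of_adj ha₁w hwa₁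
  have hca₁ : c a₁ = c y := by
    have := coloring_eq_not_of_adj c hwa₁
    grind
  have hcontains : Contains (truncate G w) a₁ Set.univ (tower r).quadruple := by
    simpa only [Contains, component_eq ha₁] using hx x₁ (.inl rfl)
  obtain ⟨t, ht, hyt⟩ := hfree.exists_adj_of_not_occurs c hyz ha₁w (hsub.trans hcluster) hca₁ hr
    hcontains
  obtain ⟨x, hxw, hyx, hxa₁⟩ : ∃ x ∈ cluster G w, G.Adj y x ∧ G.Adj x a₁ := by
    have heq : component (truncate G (w + 1)) t = cluster G w := component_eq (hsub ht)
    rw [← heq] at hcluster ⊢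
    exact (hfree.mono hcluster).exists_adj_adj c truncate_le hyt
      (heq ▸ mem_cluster_of_adj ha₁w hwa₁) hca₁
  have hxa₂ : G.Adj x a₂ := hfree.adj_of_walk c (hcluster hxw)
    (hcluster (mem_cluster_of_adj ha₁w hwa₁)) hw (hcluster (mem_cluster_of_adj ha₂w hwa₂))
    hyx hxa₁ hwa₁.symm hwa₂ hyw
  have hx : x < w := (Nat.lt_add_one_iff.1 (lt_of_mem_cluster hxw)).lt_of_ne fun h => hyw (h ▸ hyx)
  have hadj₁ : (truncate G w).Adj a₁ x := ⟨ha₁w, hx, hxa₁.symm⟩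
  have hadj₂ : (truncate G w).Adj x a₂ := ⟨hx, ha₂w, hxa₂⟩
  exact hjoin.not_reachable
    (ha₁.trans (hadj₁.reachable.trans (hadj₂.reachable.trans (SimpleGraph.Reachable.symm ha₂))))

theorem occurs_of_reaches_two (c : G.Coloring Bool) (h : Reaches (truncate G (u + 1)) u r j 2) :
    Occurs G c (cluster G u) (tower r).quadruple := by
  have hocc := (reaches_truncate_iff c u.lt_succ_self).1 h
  cases j with
  | zero => exact hocc.mono Set.inter_subset_left
  | succ j =>
    obtain ⟨w, hw, x₁, x₂, hjoin, hx⟩ : ∃ w ∈ cluster G u, w ∈ mergers G r := by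
      obtain ⟨φ, -, hφ⟩ | ⟨φ, -, hφ⟩ := hocc
      exacts [⟨_, hφ (.inl (.inl none))⟩, ⟨_, hφ (.inl (.inl none))⟩]
    have hsub := hjoin.component_subset_cluster.trans (cluster_subset_cluster hw)
    exact ((contains_truncate_iff c hjoin.left_lt).1 (hx x₁ (.inl rfl))).mono
      (Set.inter_subset_left.trans hsub)

theorem occurs_mergers_of_reaches_two (c : G.Coloring Bool)
    (h : Reaches (truncate G (u + 1)) u r j 2) :
    Occurs G c (cluster G u ∩ mergers G r) (tower j).quadruple := by
  cases j with
  | zero => exact .inl hasCopy_of_isEmpty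
  | succ j => exact (reaches_truncate_iff c u.lt_succ_self).1 h

theorem Joins.mem_mergers (c : G.Coloring Bool) (h : Joins G y u u')
    (hu : Reaches (truncate G (u + 1)) u r j 2) (hu' : Reaches (truncate G (u' + 1)) u' r j 2) :
    y ∈ mergers G r := by
  have hcontains : ∀ x < y, Reaches (truncate G (x + 1)) x r j 2 →
      Contains (truncate G y) x Set.univ (tower r).quadruple := fun x hxy hx =>
    (contains_truncate_iff c hxy).2 ((occurs_of_reaches_two c hx).mono (Set.subset_inter
      (cluster_subset_component mem_component_self hxy) (Set.subset_univ _)))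
  refine ⟨u, u', h, ?_⟩
  rintro x (rfl | rfl)
  exacts [hcontains _ h.left_lt hu, hcontains _ h.right_lt hu']

theorem Joins.reaches_stage_add_one_of_pFreeFrom (c : G.Coloring Bool) (h : Joins G y u u')
    (hfree : PFreeFrom G y (component (truncate G y) u) 4) (hy : y ∈ cluster G v)
    (hyr : y ∈ mergers G r) (hr : ¬Occurs G c (cluster G v) (tower (r + 1)))
    (hu : Reaches (truncate G (u + 1)) u r j 2) :
    Reaches (truncate G (v + 1)) v r (j + 1) 0 := by
  obtain ⟨a, hay, hya, ha⟩ := h.exists_adj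
  have hsubv := h.component_subset_cluster.trans (cluster_subset_cluster hy)
  have hsub := cluster_subset_component (G := G) mem_component_self h.left_lt
  rw [← component_eq ha] at hfree hsubv hsub
  have hcone := (occurs_mergers_of_reaches_two c hu).cone
    (reversible_quadruple _) (u := y)
    (fun hyu => (lt_of_mem_component hay (hsub hyu.1)).false)
    fun w hw hcw => hfree.adj_of_mem_mergers c hay hya (fun h => hr (h.mono hsubv)) (hsub hw.1)
      hw.2 hcw
  exact (reaches_truncate_iff c v.lt_succ_self).2 (hcone.mono (Set.insert_subset ⟨hy, hyr⟩
    (Set.inter_subset_inter_left _ (hsub.trans hsubv))))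

theorem Joins.reaches_stage_add_one (hG : PFree G 9) (c : G.Coloring Bool) (h : Joins G y u u')
    (hy : y ∈ cluster G v) (hr : ¬Occurs G c (cluster G v) (tower (r + 1)))
    (hu : Reaches (truncate G (u + 1)) u r j 2) (hu' : Reaches (truncate G (u' + 1)) u' r j 2) :
    Reaches (truncate G (v + 1)) v r (j + 1) 0 := by
  have hyr := h.mem_mergers c hu hu'
  have hsep := isCompleteBetween_component h.left_lt h.right_lt h.not_reachable
  rcases pFreeFrom_or_pFreeFrom (k := 4) (l := 4) hG hsep y with hfree | hfree
  · exact h.reaches_stage_add_one_of_pFreeFrom c hfree hy hyr hr hu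
  · exact h.symm.reaches_stage_add_one_of_pFreeFrom c hfree hy hyr hr hu'

theorem Joins.hasCopy_sum (h : Joins G y u u') (hy : y ∈ cluster G v) {f : ℕ → Bool}
    {H₁ H₂ : BicoloredGraph} (hu : HasCopy G f (cluster G u ∩ Q) H₁)
    (hu' : HasCopy G f (cluster G u' ∩ Q) H₂) : HasCopy G f (cluster G v ∩ Q) (H₁.sum H₂) := by
  have hsub : cluster G u ⊆ component (truncate G y) u :=
    cluster_subset_component mem_component_self h.left_lt
  have hsub' : cluster G u' ⊆ component (truncate G y) u' :=
    cluster_subset_component mem_component_self h.right_lt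
  have hy' := cluster_subset_cluster hy
  refine (hu.sum hu' fun a ha b hb => isCompleteBetween_component h.left_lt h.right_lt
    h.not_reachable (hsub ha.1) (hsub' hb.1)).mono (Set.union_subset ?_ ?_)
  · exact Set.inter_subset_inter_left _ (hsub.trans (h.component_subset_cluster.trans hy'))
  · exact Set.inter_subset_inter_left _ (hsub'.trans (h.symm.component_subset_cluster.trans hy'))

theorem IsLeader.lt_of_reachable (hu : IsLeader G u) (hstate : state G u' = state G u)
    (hne : u ≠ u') (h : (truncate G (y + 1)).Reachable u u') : u < y := by
  refine (Nat.lt_add_one_iff.1 (lt_of_reachable_truncate h hne)).lt_of_ne ?_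
  rintro rfl
  exact hne ((hu u' h hstate).antisymm (Nat.lt_add_one_iff.1 (lt_of_mem_cluster h)))

theorem IsLeader.exists_joins (hu : IsLeader G u) (hu' : IsLeader G u')
    (hstate : state G u = state G u') (hne : u ≠ u') (huv : u ∈ cluster G v)
    (hu'v : u' ∈ cluster G v) : ∃ y ∈ cluster G v, Joins G y u u' := by
  have huu' : (truncate G (v + 1)).Reachable u u' := (SimpleGraph.Reachable.symm huv).trans hu'v
  obtain ⟨y, hy, hy'⟩ := Nat.exists_not_and_succ_of_not_zero_of_exists
    (p := fun n => (truncate G n).Reachable u u')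
    (fun h => Nat.not_lt_zero u (lt_of_reachable_truncate h hne)) ⟨v + 1, huu'⟩
  have hyv : y < v + 1 := not_le.1 fun h => hy (huu'.mono (truncate_mono h))
  have hjoins : Joins G y u u' := ⟨hu.lt_of_reachable hstate.symm hne hy',
    hu'.lt_of_reachable hstate hne.symm hy'.symm, hy, hy'⟩
  have huy : u ∈ cluster G y := hjoins.component_subset_cluster mem_component_self
  exact ⟨y, SimpleGraph.Reachable.trans huv
    ((SimpleGraph.Reachable.symm huy).mono (truncate_mono hyv)), hjoins⟩

theorem IsLeader.eq_true_iff_positive (hG : PFree G 9) (c : G.Coloring Bool) (hu : IsLeader G u)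
    (hu' : IsLeader G u') (huv : u ∈ cluster G v) (hu'v : u' ∈ cluster G v)
    (hstate : state G u = state G v) (hstate' : state G u' = state G v)
    (h : c u = true ↔ Positive G u) : c u' = true ↔ Positive G u' := by
  by_contra hcon
  have hne : u ≠ u' := fun heq => hcon (heq ▸ h)
  obtain ⟨y, hyv, hy⟩ := hu.exists_joins hu' (hstate.trans hstate'.symm) hne huv hu'v
  have hcopy := hasCopy_of_iff_positive c h
  have hcopy' := hasCopy_of_iff_positive (u := u') (swapColors c) (by
    rw [swapColors_apply]
    grind)
  have hreach := reaches_amplification c u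
  have hreach' := reaches_amplification c u'
  simp only [state, Prod.mk.injEq] at hstate hstate'
  rw [hstate.1, hstate.2.1] at hcopy hreach
  rw [hstate'.1, hstate'.2.1] at hcopy' hreach'
  rw [hstate.2.2] at hreach
  rw [hstate'.2.2] at hreach'
  have hmax := not_reaches_amplification_add_one (G := G) (v := v)
  obtain hq | hq | hq : amplification G v = 0 ∨ amplification G v = 1 ∨ amplification G v = 2 := by
    have := amplification_le_two G v
    lia
  all_goals rw [hq] at hmax hreach hreach'
  · exact hmax two_pos ((reaches_truncate_iff c v.lt_succ_self).2
      (.inl (hy.hasCopy_sum hyv hcopy (HasCopy.flip hcopy'))))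
  · have hdouble := ((reaches_truncate_iff c u.lt_succ_self).1 hreach).hasCopy (reversible_double _)
    have hdouble' :=
      ((reaches_truncate_iff c u'.lt_succ_self).1 hreach').hasCopy (reversible_double _)
    exact hmax one_lt_two ((reaches_truncate_iff c v.lt_succ_self).2
      (.inl (hy.hasCopy_sum hyv hdouble hdouble')))
  · exact not_reaches_stage_add_one G v (hy.reaches_stage_add_one hG c hyv
      (not_occurs_tower_level_add_one c v) hreach hreach')

theorem label_ne_of_adj (hG : PFree G 9) (c : G.Coloring Bool) (huv : u < v) (h : G.Adj v u) :
    label G u ≠ label G v := by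
  intro heq
  have hstate : state G u = state G v := congrArg Prod.fst heq
  have hbright : Bright G u ↔ Bright G v := by simpa [label] using congrArg Prod.snd heq
  have hu := cluster_subset_cluster (mem_cluster_of_adj huv h) (leader_mem_cluster (G := G))
  have hleaders := IsLeader.eq_true_iff_positive hG c (isLeader_leader G u) (isLeader_leader G v) hu
    leader_mem_cluster (state_leader.trans hstate) state_leader
  have hleaders' := IsLeader.eq_true_iff_positive hG c (isLeader_leader G v) (isLeader_leader G u)
    leader_mem_cluster hu state_leader (state_leader.trans hstate)
  rw [bright_iff c, bright_iff c] at hbright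
  have hcuv := coloring_eq_not_of_adj c h
  rw [hcuv] at hbright
  have hiff : (c (leader G u) = true ↔ Positive G (leader G u)) ↔
      (c (leader G v) = true ↔ Positive G (leader G v)) := ⟨hleaders, hleaders'⟩
  rw [hiff] at hbright
  grind

end Consistency

/-! ### The algorithm -/

section Hereditary

variable {V W : Type*} {G : SimpleGraph V} {H : SimpleGraph W} {n : ℕ}

theorem IsInducedPath.exists_adj {p : Fin n → V} (hp : IsInducedPath G n p) (hn : 2 ≤ n)
    (a : Fin n) : ∃ b, G.Adj (p a) (p b) := by
  rcases Nat.eq_zero_or_pos a with ha | ha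
  · exact ⟨⟨1, hn⟩, (hp.2 _ _).2 (.inl (by simp [ha]))⟩
  · exact ⟨⟨a - 1, by lia⟩, (hp.2 _ _).2 (.inr (Nat.sub_add_cancel ha))⟩

theorem PFree.of_embedding (hG : PFree G n) (φ : H ↪g G) : PFree H n := fun ⟨p, hp, hadj⟩ =>
  hG ⟨φ ∘ p, φ.injective.comp hp, fun a b => φ.map_adj_iff.trans (hadj a b)⟩

theorem PFree.map (hG : PFree G n) (hn : 2 ≤ n) (f : V ↪ W) : PFree (G.map f) n := by
  rintro ⟨p, hp⟩
  have hrange (a) : ∃ x, f x = p a := by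
    obtain ⟨b, hab⟩ := hp.exists_adj hn a
    obtain ⟨x, y, -, hx, -⟩ := (SimpleGraph.map_adj ..).1 hab
    exact ⟨x, hx⟩
  choose q hq using hrange
  refine hG ⟨q, fun a b hab => hp.1 (by rw [← hq, ← hq, hab]), fun a b => ?_⟩
  rw [← hp.2, ← hq, ← hq, SimpleGraph.map_adj_apply]

theorem nonempty_coloring_map (c : G.Coloring Bool) (f : V ↪ W) :
    Nonempty ((G.map f).Coloring Bool) := by
  refine ⟨.mk (Function.extend f c fun _ => false) fun {x y} h => ?_⟩
  obtain ⟨x, y, hxy, rfl, rfl⟩ := (SimpleGraph.map_adj ..).1 h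
  rw [f.injective.extend_apply, f.injective.extend_apply]
  exact c.valid hxy

theorem nonempty_embedding_of_map {f : V ↪ W} {U : Type*} {K : SimpleGraph U} (φ : K ↪g G.map f)
    (hφ : ∀ x, φ x ∈ Set.range f) : Nonempty (K ↪g G) := by
  choose ψ hψ using hφ
  refine ⟨⟨ψ, fun x y h => φ.injective (by rw [← hψ, ← hψ, h])⟩, fun {x y} => ?_⟩
  rw [← φ.map_adj_iff, ← hψ, ← hψ, SimpleGraph.map_adj_apply]
  rfl

end Hereditary

/-- The graphs that the algorithm is designed for: bipartite graphs without an induced path on nine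
vertices. -/
def IsAdmissible {V : Type*} (G : SimpleGraph V) : Prop := PFree G 9 ∧ Nonempty (G.Coloring Bool)

section IsAdmissible

variable {V W : Type*} {G : SimpleGraph V} {H : SimpleGraph W}

theorem IsAdmissible.of_embedding (hG : IsAdmissible G) (φ : H ↪g G) : IsAdmissible H :=
  ⟨hG.1.of_embedding φ, hG.2.map fun c => c.comp φ.toHom⟩

theorem IsAdmissible.map (hG : IsAdmissible G) (f : V ↪ W) : IsAdmissible (G.map f) :=
  ⟨hG.1.map (by norm_num) f, hG.2.elim fun c => nonempty_coloring_map c f⟩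

theorem IsAdmissible.comap_castLE {m n : ℕ} {G : SimpleGraph (Fin n)} (hG : IsAdmissible G)
    (h : m ≤ n) : IsAdmissible (G.comap (Fin.castLE h)) :=
  hG.of_embedding (.comap (Fin.castLEEmb h) G)

end IsAdmissible

open Classical in
/-- The on-line algorithm: even colors encode labels. The odd color `2 * k + 1` is used only once,
by the `k`-th vertex, if the graph has ceased to be admissible by then. -/
noncomputable def labelAlg : OnlineAlg := fun k H =>
  if IsAdmissible H then 2 * Encodable.encode (label (H.map Fin.valEmbedding) k) else 2 * k + 1

section LabelAlg

variable {n : ℕ} {G : SimpleGraph (Fin n)}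

theorem map_comap_castLE {m : ℕ} (h : m ≤ n) :
    (G.comap (Fin.castLE h)).map Fin.valEmbedding = truncate (G.map Fin.valEmbedding) m := by
  ext x y
  simp only [truncate_adj, SimpleGraph.map_adj, SimpleGraph.comap_adj]
  constructor
  · rintro ⟨a, b, hab, rfl, rfl⟩
    exact ⟨a.2, b.2, _, _, hab, rfl, rfl⟩
  · rintro ⟨hx, hy, a, b, hab, rfl, rfl⟩
    exact ⟨⟨a, hx⟩, ⟨b, hy⟩, hab, rfl, rfl⟩

theorem runColor_labelAlg_of_isAdmissible {i : Fin n}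
    (h : IsAdmissible (G.comap (Fin.castLE i.isLt))) :
    runColor labelAlg G i = 2 * Encodable.encode (label (G.map Fin.valEmbedding) i) := by
  rw [runColor, labelAlg, if_pos h, map_comap_castLE, label_truncate (Nat.lt_succ_self _)]

theorem runColor_labelAlg_of_not_isAdmissible {i : Fin n}
    (h : ¬IsAdmissible (G.comap (Fin.castLE i.isLt))) : runColor labelAlg G i = 2 * i + 1 :=
  if_neg h

theorem runColor_labelAlg_ne_of_lt {i j : Fin n} (hij : i < j) (h : G.Adj j i) :
    runColor labelAlg G i ≠ runColor labelAlg G j := by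
  by_cases hj : IsAdmissible (G.comap (Fin.castLE j.isLt))
  · have hi : IsAdmissible (G.comap (Fin.castLE i.isLt)) :=
      hj.comap_castLE (Nat.succ_le_succ hij.le)
    obtain ⟨hfree, ⟨c⟩⟩ := hj.map Fin.valEmbedding
    rw [map_comap_castLE] at hfree c
    have hadj : (truncate (G.map Fin.valEmbedding) (j + 1)).Adj j i :=
      ⟨j.val.lt_succ_self, Nat.lt_succ_of_lt hij, SimpleGraph.map_adj_apply.2 h⟩
    have hlabel := label_ne_of_adj hfree c hij hadj
    rw [label_truncate (Nat.lt_succ_of_lt hij), label_truncate j.val.lt_succ_self] at hlabel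
    rw [runColor_labelAlg_of_isAdmissible hi, runColor_labelAlg_of_isAdmissible hj]
    exact fun heq => hlabel (Encodable.encode_injective (Nat.eq_of_mul_eq_mul_left two_pos heq))
  · rw [runColor_labelAlg_of_not_isAdmissible hj]
    by_cases hi : IsAdmissible (G.comap (Fin.castLE i.isLt))
    · rw [runColor_labelAlg_of_isAdmissible hi]
      lia
    · rw [runColor_labelAlg_of_not_isAdmissible hi]
      lia

theorem isProperAlg_labelAlg : IsProperAlg labelAlg := fun _ _ _ _ h =>
  (lt_or_gt_of_ne h.ne).elim (fun hij => runColor_labelAlg_ne_of_lt hij h.symm)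
    fun hji => (runColor_labelAlg_ne_of_lt hji h).symm

end LabelAlg

/-- The labels of the vertices whose level and stage are at most `k`. -/
def labels (k : ℕ) : Finset ((ℕ × ℕ × ℕ) × Bool) :=
  (.range (k + 1) ×ˢ .range (k + 1) ×ˢ .range 3) ×ˢ .univ

theorem card_labels (k : ℕ) : (labels k).card = 6 * (k + 1) ^ 2 := by
  simp only [labels, Finset.card_product, Finset.card_range, Finset.card_univ, Fintype.card_bool]
  ring

section Count

variable {V : Type} [Fintype V] {G : SimpleGraph V} {n k v : ℕ} {π : Fin n ≃ V}

theorem le_onlineChrom_of_occurs {f : ℕ → Bool} {Q : Set ℕ} (hQ : ∀ z ∈ Q, z < n)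
    (h : Occurs ((G.comap π).map Fin.valEmbedding) f Q (tower k)) : k ≤ onlineChrom V G := by
  obtain ⟨φ, hφ⟩ : ∃ φ : (tower k).graph ↪g (G.comap π).map Fin.valEmbedding, ∀ x, φ x ∈ Q := by
    rcases h with ⟨φ, -, hφ⟩ | ⟨φ, -, hφ⟩ <;> exact ⟨φ, hφ⟩
  obtain ⟨ψ⟩ := nonempty_embedding_of_map φ fun x => ⟨⟨φ x, hQ _ (hφ x)⟩, rfl⟩
  exact le_onlineChrom_of_tower_embedding ((SimpleGraph.Iso.comap π G).toEmbedding.comp ψ)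

theorem level_le_onlineChrom (c : ((G.comap π).map Fin.valEmbedding).Coloring Bool) (hv : v < n) :
    level ((G.comap π).map Fin.valEmbedding) v ≤ onlineChrom V G :=
  le_onlineChrom_of_occurs (fun _ hz => (lt_of_mem_cluster hz).trans_le hv) (occurs_tower_level c v)

theorem stage_le_onlineChrom (c : ((G.comap π).map Fin.valEmbedding).Coloring Bool) (hv : v < n) :
    stage ((G.comap π).map Fin.valEmbedding) v ≤ onlineChrom V G := by
  have h := (reaches_truncate_iff c v.lt_succ_self).1 (reaches_stage c v)
  cases hstage : stage ((G.comap π).map Fin.valEmbedding) v with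
  | zero => exact Nat.zero_le _
  | succ j =>
    rw [hstage] at h
    exact le_onlineChrom_of_occurs (fun _ hz => (lt_of_mem_cluster hz.1).trans_le hv) h

theorem label_mem_labels (c : ((G.comap π).map Fin.valEmbedding).Coloring Bool) (hv : v < n) :
    label ((G.comap π).map Fin.valEmbedding) v ∈ labels (onlineChrom V G) := by
  simp only [label, state, labels, Finset.mem_product, Finset.mem_range, Nat.lt_succ_iff,
    Finset.mem_univ, and_true]
  exact ⟨level_le_onlineChrom c hv, stage_le_onlineChrom c hv, amplification_le_two _ v⟩

theorem numColors_labelAlg_le (hG : IsAdmissible G) (π : Fin n ≃ V) :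
    numColors labelAlg (G.comap π) ≤ 6 * (onlineChrom V G + 1) ^ 2 := by
  have hπ : IsAdmissible (G.comap π) := hG.of_embedding (.comap π.toEmbedding G)
  obtain ⟨-, ⟨c⟩⟩ := hπ.map Fin.valEmbedding
  have hsub : Finset.univ.image (runColor labelAlg (G.comap π)) ⊆
      (labels (onlineChrom V G)).image fun p => 2 * Encodable.encode p := by
    refine Finset.image_subset_iff.2 fun i _ => ?_
    rw [runColor_labelAlg_of_isAdmissible (hπ.comap_castLE _)]
    exact Finset.mem_image_of_mem _ (label_mem_labels c i.isLt)
  calc numColors labelAlg (G.comap π) ≤ _ := Finset.card_le_card hsub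
    _ ≤ (labels (onlineChrom V G)).card := Finset.card_image_le
    _ = 6 * (onlineChrom V G + 1) ^ 2 := card_labels _

end Count

theorem stmt0 :
    ∃ A : OnlineAlg, IsProperAlg A ∧
      ∀ (V : Type) [Fintype V] (G : SimpleGraph V),
        PFree G 9 →
        (∃ side : V → Bool, ∀ x y, G.Adj x y → side x ≠ side y) →
        ∀ (n : ℕ) (π : Fin n ≃ V),
          numColors A (G.comap π) ≤ 6 * (onlineChrom V G + 1) ^ 2 := by
  refine ⟨labelAlg, isProperAlg_labelAlg, fun V _ G hfree ⟨side, hside⟩ n π => ?_⟩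
  exact numColors_labelAlg_le ⟨hfree, ⟨.mk side fun {x y} => hside x y⟩⟩ π
end

section
/- If a finite graph G contains X_k as an induced subgraph, then the on-line chromatic number of G satisfies χ*(G) ≥ k. -/
/-! ### The graphs `X_k` -/

/-- Vertex set of the graph `X_k` (with a junk value at `k = 0`). -/
def XV : ℕ → Type
  | 0 => PUnit
  | 1 => PUnit
  | 2 => Bool
  | (n+3) => Option (XV (n+2) ⊕ XV (n+2))

/-- The root of `X_k`. -/
def XRoot : (k : ℕ) → XV k
  | 0 => PUnit.unit
  | 1 => PUnit.unit
  | 2 => true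
  | (_+3) => none

/-- The side of a vertex of `X_k`: `true` is the root side, `false` the non-root side. -/
def XSide : (k : ℕ) → XV k → Bool
  | 0, _ => true
  | 1, _ => true
  | 2, v => v
  | (_+3), none => true
  | (n+3), some (Sum.inl x) => !(XSide (n+2) x)
  | (n+3), some (Sum.inr x) => XSide (n+2) x

/-- Base adjacency relation of `X_k`:  for `k ≥ 3`, `X_k` consists of two disjoint copies of
`X_{k-1}` with no edges in between, together with a root vertex joined to the root side of the
first copy and to the non-root side of the second copy. -/
def XRel : (k : ℕ) → XV k → XV k → Prop
  | 0, _, _ => False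
  | 1, _, _ => False
  | 2, u, v => u ≠ v
  | (n+3), none, some (Sum.inl x) => XSide (n+2) x = true
  | (n+3), none, some (Sum.inr x) => XSide (n+2) x = false
  | (n+3), some (Sum.inl x), none => XSide (n+2) x = true
  | (n+3), some (Sum.inr x), none => XSide (n+2) x = false
  | (n+3), some (Sum.inl x), some (Sum.inl y) => XRel (n+2) x y
  | (n+3), some (Sum.inr x), some (Sum.inr y) => XRel (n+2) x y
  | (_+3), _, _ => False

/-- The graph `X_k`. -/
def XGraph (k : ℕ) : SimpleGraph (XV k) := SimpleGraph.fromRel (XRel k)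

/-!
The adversary presents two disjoint copies of `X_{k-1}` and only then decides which of them plays
the role of `X^1_{k-1}`. This choice swaps the sides on which their colors end up, and the
algorithm cannot anticipate it, as it has not yet seen the root of `X_k`.

The induction runs over all sets `F` of colors: on `X_k` the adversary forces a color of `F` on the
root side, or else `k - 1` colors on the non-root side while no vertex gets a color of `F`. If a
color of `F` occurs in one of the two copies, the choice of roles brings it to the root side.
Otherwise let `r` be the color of the root of the first copy; the second copy is played against
`F ∪ {r}`. If it has `r` on its root side, it becomes `X^1_{k-1}`: this moves `r` to the non-root
side, next to the `k - 2` colors on the non-root side of the first copy, which differ from `r`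
because the root is adjacent to all of that side. If it avoids `r`, the first copy becomes
`X^1_{k-1}`, and `r` joins the `k - 2` colors on the non-root side of the second. For `F = ∅`, the
color of the root of `X_k` is the `k`-th one.
-/

namespace OnlineAlg

variable {V W : Type*} {m n : ℕ}

/-- The coloring of the vertices of `G` that the algorithm `A` produces when they are presented in
the order `π 0, π 1, …`. -/
def coloring (A : OnlineAlg) (G : SimpleGraph V) (π : Fin n ≃ V) : V → ℕ :=
  runColor A (G.comap π) ∘ π.symm

theorem coloring_apply (A : OnlineAlg) (G : SimpleGraph V) (π : Fin n ≃ V) (i : Fin n) :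
    A.coloring G π (π i) = runColor A (G.comap π) i :=
  congrArg _ (π.symm_apply_apply i)

theorem coloring_ne_of_adj {A : OnlineAlg} (hA : IsProperAlg A) {G : SimpleGraph V}
    (π : Fin n ≃ V) {u v : V} (huv : G.Adj u v) : A.coloring G π u ≠ A.coloring G π v :=
  hA n (G.comap π) _ _ (by simpa using huv)

theorem numColors_comap (A : OnlineAlg) (G : SimpleGraph V) (π : Fin n ≃ V) :
    numColors A (G.comap π) = (Set.range (A.coloring G π)).ncard := by
  rw [coloring, π.symm.surjective.range_comp, ← Set.image_univ, ← Finset.coe_univ,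
    ← Finset.coe_image, Set.ncard_coe_finset, numColors]

theorem runColor_castAdd (A : OnlineAlg) (G : SimpleGraph (Fin (m + n))) (i : Fin m) :
    runColor A G (Fin.castAdd n i) = runColor A (G.comap (Fin.castAdd n)) i :=
  rfl

theorem coloring_apply_of_prefix (A : OnlineAlg) {G : SimpleGraph V} {H : SimpleGraph W}
    (f : H ↪g G) {π : Fin m ≃ W} {ρ : Fin (m + n) ≃ V}
    (hρ : ∀ i, ρ (Fin.castAdd n i) = f (π i)) (w : W) :
    A.coloring G ρ (f w) = A.coloring H π w := by
  have hcomap : (G.comap ρ).comap (Fin.castAdd n) = H.comap π := by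
    ext i j
    simp only [SimpleGraph.comap_adj, hρ, f.map_adj_iff]
  obtain ⟨i, rfl⟩ := π.surjective w
  rw [← hρ, coloring_apply, runColor_castAdd, hcomap, coloring_apply]

theorem exists_coloring_extending [Finite V] (A : OnlineAlg) {G : SimpleGraph V}
    {H : SimpleGraph W} (f : H ↪g G) (π : Fin m ≃ W) :
    ∃ (n : ℕ) (ρ : Fin n ≃ V), A.coloring G ρ ∘ f = A.coloring H π := by
  classical
  let ρ : Fin (m + Nat.card ↥(Set.range f)ᶜ) ≃ V :=
    (finSumFinEquiv.symm.trans
      ((π.trans (Equiv.ofInjective f f.injective)).sumCongr (Finite.equivFin _).symm)).trans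
      (Equiv.Set.sumCompl (Set.range f))
  have hρ (i : Fin m) : ρ (Fin.castAdd _ i) = f (π i) := by
    simp only [ρ, Equiv.trans_apply, finSumFinEquiv_symm_apply_castAdd, Equiv.sumCongr_apply,
      Sum.map_inl, Equiv.Set.sumCompl_apply_inl, Equiv.ofInjective_apply]
  exact ⟨_, ρ, funext (A.coloring_apply_of_prefix f hρ)⟩

/-- The algorithm that colors a graph as `A` does once the on-line graph `K`, to which no later
vertex is adjacent, has been presented. -/
def after (A : OnlineAlg) (K : SimpleGraph (Fin m)) : OnlineAlg :=
  fun k G => A (m + k) ((K ⊕g G).comap (finSumFinEquiv (n := k + 1)).symm)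

theorem runColor_after (A : OnlineAlg) (K : SimpleGraph (Fin m)) (G : SimpleGraph (Fin n))
    (i : Fin n) :
    runColor (A.after K) G i =
      runColor A ((K ⊕g G).comap finSumFinEquiv.symm) (Fin.natAdd m i) := by
  refine congrArg (A (m + i)) ?_
  have hcast (a : Fin (m + (i + 1))) :
      finSumFinEquiv.symm (Fin.castLE (Fin.natAdd m i).isLt a) =
        (finSumFinEquiv.symm a).map id (Fin.castLE i.isLt) := by
    refine Fin.addCases (fun a => ?_) (fun a => ?_) a
    · rw [finSumFinEquiv_symm_apply_castAdd]
      exact finSumFinEquiv_symm_apply_castAdd a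
    · rw [finSumFinEquiv_symm_apply_natAdd]
      exact finSumFinEquiv_symm_apply_natAdd (Fin.castLE i.isLt a)
  have hsum : (K ⊕g G).comap (Sum.map id (Fin.castLE i.isLt)) =
      K ⊕g G.comap (Fin.castLE i.isLt) := by
    ext (a | a) (b | b) <;> simp
  rw [← hsum, SimpleGraph.comap_comap, SimpleGraph.comap_comap]
  exact congrArg (SimpleGraph.comap · _) (funext fun a => (hcast a).symm)

theorem coloring_sum (A : OnlineAlg) (G : SimpleGraph V) (H : SimpleGraph W) (π : Fin m ≃ V)
    (ρ : Fin n ≃ W) :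
    A.coloring (G ⊕g H) (finSumFinEquiv.symm.trans (π.sumCongr ρ)) =
      Sum.elim (A.coloring G π) ((A.after (G.comap π)).coloring H ρ) := by
  have hcomap : (G ⊕g H).comap (finSumFinEquiv.symm.trans (π.sumCongr ρ)) =
      (G.comap π ⊕g H.comap ρ).comap finSumFinEquiv.symm := by
    ext i j
    obtain ⟨i, rfl⟩ := finSumFinEquiv.surjective i
    obtain ⟨j, rfl⟩ := finSumFinEquiv.surjective j
    cases i <;> cases j <;> simp
  funext x
  rcases x with v | w
  · exact A.coloring_apply_of_prefix SimpleGraph.Embedding.sumInl (fun i => by simp) v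
  · obtain ⟨i, rfl⟩ := ρ.surjective w
    have hi : (finSumFinEquiv.symm.trans (π.sumCongr ρ)) (Fin.natAdd m i) = Sum.inr (ρ i) := by
      simp
    rw [← hi, coloring_apply, hcomap, ← runColor_after, hi, Sum.elim_inr, coloring_apply]

end OnlineAlg

theorem IsProperAlg.after {A : OnlineAlg} (hA : IsProperAlg A) {m : ℕ}
    (K : SimpleGraph (Fin m)) : IsProperAlg (A.after K) := by
  intro n G i j hij
  rw [OnlineAlg.runColor_after, OnlineAlg.runColor_after]
  exact hA _ _ _ _ (by simpa using hij)

theorem le_onlineChrom {V : Type} [Fintype V] {G : SimpleGraph V} {k : ℕ}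
    (h : ∀ A, IsProperAlg A → ∃ (n : ℕ) (π : Fin n ≃ V), k ≤ numColors A (G.comap π)) :
    k ≤ onlineChrom V G := by
  refine le_csInf ⟨Fintype.card V, fun i _ => i, ?_, ?_⟩ ?_
  · intro n H i j hij hcol
    exact hij.ne (Fin.ext hcol)
  · intro n π
    exact Finset.card_image_le.trans_eq (by rw [Finset.card_univ, Fintype.card_congr π])
  · rintro m ⟨A, hA, hm⟩
    obtain ⟨n, π, hk⟩ := h A hA
    exact hk.trans (hm n π)

instance XV.instFinite : ∀ k, Finite (XV k)
  | 0 | 1 => inferInstanceAs (Finite PUnit)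
  | 2 => inferInstanceAs (Finite Bool)
  | n + 3 =>
    have := XV.instFinite (n + 2)
    inferInstanceAs (Finite (Option (XV (n + 2) ⊕ XV (n + 2))))

theorem XSide_root : ∀ k, XSide k (XRoot k) = true
  | 0 | 1 | 2 | _ + 3 => rfl

namespace XGraph

theorem adj_root_of_XSide_eq_false : ∀ {k : ℕ} {x : XV k},
    XSide k x = false → (XGraph k).Adj (XRoot k) x
  | 2, false, _ => ⟨Bool.noConfusion, Or.inl Bool.noConfusion⟩
  | _ + 3, some (Sum.inl _), h => ⟨nofun, Or.inl ((Bool.not_eq_false' _).mp h)⟩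
  | _ + 3, some (Sum.inr _), h => ⟨nofun, Or.inl h⟩

/-- The colors that a coloring of `X_k` uses on the non-root side. -/
def nonRootColors {k : ℕ} (c : XV k → ℕ) : Set ℕ :=
  c '' {x | XSide k x = false}

theorem finite_nonRootColors {k : ℕ} (c : XV k → ℕ) : (nonRootColors c).Finite :=
  (Set.toFinite _).image c

theorem root_notMem_nonRootColors {k : ℕ} {c : XV k → ℕ}
    (hc : ∀ u v, (XGraph k).Adj u v → c u ≠ c v) : c (XRoot k) ∉ nonRootColors c := by
  rintro ⟨x, hx, hcx⟩
  exact hc _ _ (adj_root_of_XSide_eq_false hx) hcx.symm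

/-- The outcome that the adversary can force on a copy of `X_k`, whatever the set `F` of colors:
a color of `F` on the root side, or else no color of `F` at all and `k - 1` colors on the non-root
side. -/
def IsFavorable {k : ℕ} (F : Set ℕ) (c : XV k → ℕ) : Prop :=
  (∃ x, XSide k x = true ∧ c x ∈ F) ∨ (∀ x, c x ∉ F) ∧ k ≤ (nonRootColors c).ncard + 1

theorem IsFavorable.le_ncard_range {k : ℕ} {c : XV k → ℕ} (h : IsFavorable ∅ c)
    (hc : ∀ u v, (XGraph k).Adj u v → c u ≠ c v) : k ≤ (Set.range c).ncard := by
  obtain ⟨_, _, hmem⟩ | ⟨-, hcard⟩ := h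
  · exact hmem.elim
  calc
    k ≤ (nonRootColors c).ncard + 1 := hcard
    _ = (insert (c (XRoot k)) (nonRootColors c)).ncard :=
      (Set.ncard_insert_of_notMem (root_notMem_nonRootColors hc) (finite_nonRootColors c)).symm
    _ ≤ (Set.range c).ncard :=
      Set.ncard_le_ncard
        (Set.insert_subset (Set.mem_range_self _) (Set.image_subset_range _ _))

theorem isFavorable_of_le_one {k : ℕ} (hk : k ≤ 1) (F : Set ℕ) (c : XV k → ℕ) :
    IsFavorable F c := by
  have hsub : ∀ {k : ℕ}, k ≤ 1 → Subsingleton (XV k)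
    | 0, _ | 1, _ => inferInstanceAs (Subsingleton PUnit)
  have := hsub hk
  by_cases hroot : c (XRoot k) ∈ F
  · exact Or.inl ⟨XRoot k, XSide_root k, hroot⟩
  · exact Or.inr ⟨fun x => Subsingleton.elim (XRoot k) x ▸ hroot, hk.trans (Nat.le_add_left 1 _)⟩

/-- The automorphism of the edge `X_2` that exchanges its endpoints. -/
def swapTwo : XGraph 2 ≃g XGraph 2 where
  toEquiv := Equiv.boolNot
  map_rel_iff' {x y} := by
    have hadj (u v : Bool) : (XGraph 2).Adj u v ↔ u ≠ v :=
      (SimpleGraph.fromRel_adj (XRel 2) u v).trans ⟨And.left, fun h => ⟨h, Or.inl h⟩⟩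
    exact (hadj _ _).trans (Equiv.boolNot.injective.ne_iff.trans (hadj _ _).symm)

theorem isFavorable_two_or_swap (F : Set ℕ) (c : XV 2 → ℕ) :
    IsFavorable F c ∨ IsFavorable F (c ∘ swapTwo) := by
  by_cases htrue : c true ∈ F
  · exact Or.inl (Or.inl ⟨true, rfl, htrue⟩)
  by_cases hfalse : c false ∈ F
  · exact Or.inr (Or.inl ⟨true, rfl, hfalse⟩)
  have hcolors : nonRootColors c = {c false} := Set.image_singleton
  refine Or.inl (Or.inr ⟨Bool.rec hfalse htrue, ?_⟩)
  rw [hcolors, Set.ncard_singleton]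

/-- The two copies of `X_{n+2}` inside `X_{n+3}`: the root of `X_{n+3}` is joined to the root side
of the left copy and to the non-root side of the right one. -/
def copies (n : ℕ) : XGraph (n + 2) ⊕g XGraph (n + 2) ↪g XGraph (n + 3) where
  toFun x := (some x : Option (XV (n + 2) ⊕ XV (n + 2)))
  inj' := Option.some_injective _
  map_rel_iff' {x y} := by
    refine (SimpleGraph.fromRel_adj (XRel (n + 3)) _ _).trans ?_
    rcases x with x | x <;> rcases y with y | y
    · exact (and_congr_left' ((Option.some_injective _).comp Sum.inl_injective).ne_iff).trans
        (SimpleGraph.fromRel_adj (XRel (n + 2)) x y).symm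
    · exact ⟨fun h => h.2.elim False.elim False.elim, nofun⟩
    · exact ⟨fun h => h.2.elim False.elim False.elim, nofun⟩
    · exact (and_congr_left' ((Option.some_injective _).comp Sum.inr_injective).ne_iff).trans
        (SimpleGraph.fromRel_adj (XRel (n + 2)) x y).symm

variable {n : ℕ}

theorem forall_iff_root_and_copies {p : XV (n + 3) → Prop} :
    (∀ x, p x) ↔ p (XRoot (n + 3)) ∧ ∀ x, p (copies n x) :=
  Option.forall

theorem XSide_copies_inl (x : XV (n + 2)) :
    XSide (n + 3) (copies n (Sum.inl x)) = !XSide (n + 2) x :=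
  rfl

theorem XSide_copies_inr (x : XV (n + 2)) :
    XSide (n + 3) (copies n (Sum.inr x)) = XSide (n + 2) x :=
  rfl

variable {F : Set ℕ} {a b : XV (n + 2) → ℕ} {c c' : XV (n + 3) → ℕ}

theorem insert_subset_nonRootColors (hc : c ∘ copies n = Sum.elim a b) {x : XV (n + 2)}
    (hx : XSide (n + 2) x = true) : insert (a x) (nonRootColors b) ⊆ nonRootColors c := by
  refine Set.insert_subset ⟨copies n (Sum.inl x), ?_, congrFun hc (Sum.inl x)⟩ ?_
  · exact (XSide_copies_inl x).trans ((Bool.not_eq_false' _).mpr hx)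
  · rintro _ ⟨y, hy, rfl⟩
    exact ⟨copies n (Sum.inr y), (XSide_copies_inr y).trans hy, congrFun hc (Sum.inr y)⟩

theorem isFavorable_of_forall_notMem (hc : c ∘ copies n = Sum.elim a b) (ha : ∀ x, a x ∉ F)
    (hb : ∀ x, b x ∉ F) {x : XV (n + 2)} (hx : XSide (n + 2) x = true)
    (hxb : a x ∉ nonRootColors b) (hcard : n + 2 ≤ (nonRootColors b).ncard + 1) :
    IsFavorable F c := by
  by_cases hroot : c (XRoot (n + 3)) ∈ F
  · exact Or.inl ⟨_, XSide_root _, hroot⟩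
  refine Or.inr ⟨forall_iff_root_and_copies.mpr ⟨hroot, fun y => ?_⟩, ?_⟩
  · rw [← Function.comp_apply (f := c), hc]
    exact Sum.rec ha hb y
  calc
    n + 3 ≤ (nonRootColors b).ncard + 1 + 1 := Nat.add_le_add_right hcard 1
    _ = (insert (a x) (nonRootColors b)).ncard + 1 := by
      rw [Set.ncard_insert_of_notMem hxb (finite_nonRootColors b)]
    _ ≤ (nonRootColors c).ncard + 1 :=
      Nat.add_le_add_right
        (Set.ncard_le_ncard (insert_subset_nonRootColors hc hx) (finite_nonRootColors c)) 1

theorem isFavorable_or_swap_of_mem (hc : c ∘ copies n = Sum.elim a b)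
    (hc' : c' ∘ copies n = Sum.elim b a) {x : XV (n + 2)} (hx : a x ∈ F) :
    IsFavorable F c ∨ IsFavorable F c' := by
  cases hside : XSide (n + 2) x with
  | false =>
    refine Or.inl (Or.inl ⟨copies n (Sum.inl x), ?_, ?_⟩)
    · rw [XSide_copies_inl, hside, Bool.not_false]
    · rwa [← Function.comp_apply (f := c), hc]
  | true =>
    refine Or.inr (Or.inl ⟨copies n (Sum.inr x), (XSide_copies_inr x).trans hside, ?_⟩)
    rwa [← Function.comp_apply (f := c'), hc']

theorem isFavorable_or_swap (hc : c ∘ copies n = Sum.elim a b)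
    (hc' : c' ∘ copies n = Sum.elim b a) (hroot : a (XRoot (n + 2)) ∉ nonRootColors a)
    (ha : IsFavorable F a) (hb : IsFavorable (insert (a (XRoot (n + 2))) F) b) :
    IsFavorable F c ∨ IsFavorable F c' := by
  by_cases haF : ∃ x, a x ∈ F
  · obtain ⟨x, hx⟩ := haF
    exact isFavorable_or_swap_of_mem hc hc' hx
  by_cases hbF : ∃ x, b x ∈ F
  · obtain ⟨x, hx⟩ := hbF
    exact (isFavorable_or_swap_of_mem hc' hc hx).symm
  rw [not_exists] at haF hbF
  obtain ⟨x, hx, hbx⟩ | ⟨hb, hcard⟩ := hb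
  · have hbx : b x = a (XRoot (n + 2)) := hbx.resolve_right (hbF x)
    obtain ⟨y, -, hy⟩ | ⟨-, hcard⟩ := ha
    · exact (haF y hy).elim
    · exact Or.inr (isFavorable_of_forall_notMem hc' hbF haF hx (hbx ▸ hroot) hcard)
  · refine Or.inl (isFavorable_of_forall_notMem hc haF hbF (XSide_root _) ?_ hcard)
    rintro ⟨y, -, hy⟩
    exact hb y (hy ▸ Set.mem_insert _ _)

end XGraph

namespace OnlineAlg

open XGraph

variable {A : OnlineAlg}

theorem exists_isFavorable_coloring_of_le_one (A : OnlineAlg) (F : Set ℕ) {k : ℕ} (hk : k ≤ 1) :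
    ∃ (n : ℕ) (π : Fin n ≃ XV k), IsFavorable F (A.coloring (XGraph k) π) :=
  ⟨_, (Finite.equivFin (XV k)).symm, isFavorable_of_le_one hk F _⟩

theorem exists_isFavorable_coloring_two (A : OnlineAlg) (F : Set ℕ) :
    ∃ (n : ℕ) (π : Fin n ≃ XV 2), IsFavorable F (A.coloring (XGraph 2) π) := by
  let π := (Finite.equivFin (XV 2)).symm
  obtain ⟨n, ρ, hρ⟩ := A.exists_coloring_extending swapTwo.toEmbedding π
  rcases isFavorable_two_or_swap F (A.coloring (XGraph 2) ρ) with h | h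
  · exact ⟨n, ρ, h⟩
  · exact ⟨_, π, hρ ▸ h⟩

theorem exists_isFavorable_coloring_of_copies {k m : ℕ} {a b : XV (k + 2) → ℕ} {F : Set ℕ}
    {σ : Fin m ≃ XV (k + 2) ⊕ XV (k + 2)}
    (hσ : A.coloring (XGraph (k + 2) ⊕g XGraph (k + 2)) σ = Sum.elim a b)
    (hroot : a (XRoot (k + 2)) ∉ nonRootColors a) (ha : IsFavorable F a)
    (hb : IsFavorable (insert (a (XRoot (k + 2))) F) b) :
    ∃ (n : ℕ) (π : Fin n ≃ XV (k + 3)), IsFavorable F (A.coloring (XGraph (k + 3)) π) := by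
  obtain ⟨n, π, hπ⟩ := A.exists_coloring_extending (copies k) σ
  obtain ⟨n', π', hπ'⟩ :=
    A.exists_coloring_extending (SimpleGraph.Iso.sumComm.toEmbedding.trans (copies k)) σ
  have hswap : A.coloring (XGraph (k + 3)) π' ∘ copies k = Sum.elim b a := by
    rw [← Sum.elim_swap, ← hσ, ← hπ']
    funext x
    exact congrArg (A.coloring (XGraph (k + 3)) π' ∘ copies k) (Sum.swap_swap x).symm
  rcases isFavorable_or_swap (hπ.trans hσ) hswap hroot ha hb with h | h
  · exact ⟨n, π, h⟩
  · exact ⟨n', π', h⟩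

theorem exists_isFavorable_coloring : ∀ (k : ℕ) {A : OnlineAlg}, IsProperAlg A → ∀ F : Set ℕ,
    ∃ (n : ℕ) (π : Fin n ≃ XV k), IsFavorable F (A.coloring (XGraph k) π)
  | 0, A, _, F => A.exists_isFavorable_coloring_of_le_one F zero_le_one
  | 1, A, _, F => A.exists_isFavorable_coloring_of_le_one F le_rfl
  | 2, A, _, F => A.exists_isFavorable_coloring_two F
  | k + 3, A, hA, F => by
    obtain ⟨m, π, hπ⟩ := exists_isFavorable_coloring (k + 2) hA F
    set a := A.coloring (XGraph (k + 2)) π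
    obtain ⟨n, ρ, hρ⟩ := exists_isFavorable_coloring (k + 2)
      (hA.after ((XGraph (k + 2)).comap π)) (insert (a (XRoot (k + 2))) F)
    have hroot : a (XRoot (k + 2)) ∉ nonRootColors a :=
      root_notMem_nonRootColors fun _ _ => coloring_ne_of_adj hA π
    exact exists_isFavorable_coloring_of_copies (A.coloring_sum _ _ π ρ) hroot hπ hρ

end OnlineAlg

theorem stmt2 {V : Type} [Fintype V] (G : SimpleGraph V) (k : ℕ) (hk : 1 ≤ k)
    (h : Nonempty (XGraph k ↪g G)) :
    k ≤ onlineChrom V G := by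
  obtain ⟨f⟩ := h
  refine le_onlineChrom fun A hA => ?_
  obtain ⟨m, π, hπ⟩ := OnlineAlg.exists_isFavorable_coloring k hA ∅
  obtain ⟨n, ρ, hρ⟩ := A.exists_coloring_extending f π
  refine ⟨n, ρ, ?_⟩
  calc
    k ≤ (Set.range (A.coloring (XGraph k) π)).ncard :=
      hπ.le_ncard_range fun _ _ => OnlineAlg.coloring_ne_of_adj hA π
    _ ≤ (Set.range (A.coloring G ρ)).ncard :=
      Set.ncard_le_ncard (hρ ▸ Set.range_comp_subset_range f (A.coloring G ρ))
    _ = numColors A (G.comap ρ) := (A.numColors_comap G ρ).symm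
end
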